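/- arXiv:2102.05538 — 9 statements merged into one kernel-verified Lean document; each statement's English description precedes it below -/
import Mathlib

section
/- Dirichlet principle for reversible Markov chains: assume detailed balance. For any disjoint nonempty A, B ⊆ 𝓗 and any f ∈ C_{1,0}(A,B), one has 𝓓(f) ≥ cap(A,B) = 𝓓(h_{A,B}), with equality if and only if f = h_{A,B}. Consequently cap(A,B) = inf_{f ∈ C_{1,0}(A,B)} 𝓓(f), and the infimum is attained uniquely at h_{A,B}. -/
/-! Under detailed balance the bilinear form `(f, g) ↦ ∑ x, μ x * f x * (-(𝓛 g) x)` equals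
`(1/2) ∑ x y, μ x * r x y * (f y - f x) * (g y - g x)`, hence is symmetric and nonnegative.
Write `f = h + g`, where `g` vanishes on `A ∪ B`. Since `𝓛 h` vanishes off `A ∪ B`, the cross
term of `g` and `h` is zero, so `𝓓(f) = 𝓓(h) + 𝓓(g)` (`dirForm_eq_add_of_isEqPotential`). Finally
`𝓓(g) ≥ 0`, and `𝓓(g) = 0` forces `g` to be constant along every positive-rate transition, hence
constant by irreducibility, hence zero because `g` vanishes on the nonempty set `A`. -/

open Finset

section Setup

variable {H : Type*}

/-- The generator of the continuous-time Markov chain with jump rates `r`: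
`(𝓛 f)(x) = ∑ y, r x y * (f y - f x)`. -/
noncomputable def jumpGen [Fintype H] (r : H → H → ℝ) (f : H → ℝ) (x : H) : ℝ :=
  ∑ y, r x y * (f y - f x)

/-- The Dirichlet form `𝓓(f) = ∑ x, μ x * f x * (-(𝓛 f) x)`. -/
noncomputable def dirForm [Fintype H] (μ : H → ℝ) (r : H → H → ℝ) (f : H → ℝ) : ℝ :=
  ∑ x, μ x * f x * (-jumpGen r f x)

/-- Irreducibility of the rates: any two distinct states are joined by a chain of
transitions with positive rate. -/
def IrreducibleRates (r : H → H → ℝ) : Prop :=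
  ∀ x y : H, x ≠ y → ∃ (n : ℕ) (z : ℕ → H),
    z 0 = x ∧ z n = y ∧ ∀ i < n, 0 < r (z i) (z (i + 1))

/-- `h` is the equilibrium potential between `A` and `B` (w.r.t. rates `r`):
`h ≡ 1` on `A`, `h ≡ 0` on `B`, and `𝓛 h = 0` off `A ∪ B`. -/
def IsEqPotential [Fintype H] [DecidableEq H] (r : H → H → ℝ) (A B : Finset H)
    (h : H → ℝ) : Prop :=
  (∀ x ∈ A, h x = 1) ∧ (∀ x ∈ B, h x = 0) ∧ ∀ x, x ∉ A ∪ B → jumpGen r h x = 0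

/-- Conductance `c(x,y) = μ x * r x y`. -/
noncomputable def conduct (μ : H → ℝ) (r : H → H → ℝ) (x y : H) : ℝ := μ x * r x y

/-- Symmetrized conductance `c^s(x,y) = (c(x,y) + c(y,x))/2`. -/
noncomputable def conductS (μ : H → ℝ) (r : H → H → ℝ) (x y : H) : ℝ :=
  (conduct μ r x y + conduct μ r y x) / 2

/-- A flow: an antisymmetric function vanishing on pairs with zero symmetrized
conductance. -/
def IsFlowOf (μ : H → ℝ) (r : H → H → ℝ) (φ : H → H → ℝ) : Prop :=
  (∀ x y, φ x y = -φ y x) ∧ ∀ x y, conductS μ r x y = 0 → φ x y = 0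

/-- The square of the flow norm:
`‖φ‖² = (1/2) ∑_{(x,y) : c^s(x,y) > 0} φ(x,y)² / c^s(x,y)`. -/
noncomputable def flowNormSq [Fintype H] (μ : H → ℝ) (r : H → H → ℝ)
    (φ : H → H → ℝ) : ℝ :=
  (1 / 2) * ∑ x, ∑ y, if 0 < conductS μ r x y then φ x y ^ 2 / conductS μ r x y else 0

/-- Divergence of a flow: `(div φ)(x) = ∑ y, φ x y`. -/
noncomputable def divg [Fintype H] (φ : H → H → ℝ) (x : H) : ℝ := ∑ y, φ x y

/-- The flow `Ψ_f(x,y) = c^s(x,y) (f y - f x)`. -/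
noncomputable def PsiF (μ : H → ℝ) (r : H → H → ℝ) (f : H → ℝ) (x y : H) : ℝ :=
  conductS μ r x y * (f y - f x)

/-- The flow `Φ_f(x,y) = f(y) c(y,x) - f(x) c(x,y)` on pairs with `c^s > 0`,
zero elsewhere. -/
noncomputable def PhiF (μ : H → ℝ) (r : H → H → ℝ) (f : H → ℝ) (x y : H) : ℝ :=
  if 0 < conductS μ r x y then f y * conduct μ r y x - f x * conduct μ r x y else 0

/-- The flow `Φ*_f(x,y) = f(y) c(x,y) - f(x) c(y,x)` on pairs with `c^s > 0`,
zero elsewhere. -/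
noncomputable def PhiStarF (μ : H → ℝ) (r : H → H → ℝ) (f : H → ℝ) (x y : H) : ℝ :=
  if 0 < conductS μ r x y then f y * conduct μ r x y - f x * conduct μ r y x else 0

/-- The class `𝔘_a(A,B)` of flows: divergence-free off `A ∪ B`, with
`(div φ)(A) = a` and `(div φ)(B) = -a`. -/
def InFlowClass [Fintype H] [DecidableEq H] (μ : H → ℝ) (r : H → H → ℝ) (a : ℝ)
    (A B : Finset H) (φ : H → H → ℝ) : Prop :=
  IsFlowOf μ r φ ∧ (∀ x, x ∉ A ∪ B → divg φ x = 0) ∧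
    (∑ x ∈ A, divg φ x = a) ∧ (∑ x ∈ B, divg φ x = -a)

/-- The adjoint rates `r†(x,y) = μ(y) r(y,x) / μ(x)`. -/
noncomputable def radj (μ : H → ℝ) (r : H → H → ℝ) (x y : H) : ℝ := μ y * r y x / μ x

end Setup

/-- Summation by parts for reversible rates. -/
lemma sum_mul_neg_jumpGen {H : Type*} [Fintype H] {r : H → H → ℝ} {μ : H → ℝ}
    (hrev : ∀ x y, μ x * r x y = μ y * r y x) (f g : H → ℝ) :
    ∑ x, μ x * f x * (-jumpGen r g x) =
      (1 / 2) * ∑ x, ∑ y, μ x * r x y * ((f y - f x) * (g y - g x)) := by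
  have h1 : ∑ x, μ x * f x * (-jumpGen r g x) =
      ∑ x, ∑ y, μ x * r x y * (-f x * (g y - g x)) := by
    refine Finset.sum_congr rfl fun x _ => ?_
    rw [jumpGen, ← Finset.sum_neg_distrib, Finset.mul_sum]
    exact Finset.sum_congr rfl fun y _ => by ring
  have h2 : ∑ x, ∑ y, μ x * r x y * (-f x * (g y - g x)) =
      ∑ x, ∑ y, μ x * r x y * (f y * (g y - g x)) := by
    rw [Finset.sum_comm]
    refine Finset.sum_congr rfl fun x _ => Finset.sum_congr rfl fun y _ => ?_
    rw [hrev y x]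
    ring
  have h3 : ∑ x, ∑ y, μ x * r x y * ((f y - f x) * (g y - g x)) =
      ∑ x, ∑ y, μ x * r x y * (-f x * (g y - g x)) +
        ∑ x, ∑ y, μ x * r x y * (f y * (g y - g x)) := by
    simp only [← Finset.sum_add_distrib]
    exact Finset.sum_congr rfl fun x _ => Finset.sum_congr rfl fun y _ => by ring
  rw [h3, ← h2, h1]
  ring

lemma dirForm_eq_half_sum_sq {H : Type*} [Fintype H] {r : H → H → ℝ} {μ : H → ℝ}
    (hrev : ∀ x y, μ x * r x y = μ y * r y x) (g : H → ℝ) :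
    dirForm μ r g = (1 / 2) * ∑ x, ∑ y, μ x * r x y * (g y - g x) ^ 2 := by
  simp only [dirForm, sum_mul_neg_jumpGen hrev, pow_two]

/-- Orthogonal decomposition of the energy: the cross term pairs `f - h`, which vanishes on
`A ∪ B`, with `𝓛 h`, which vanishes off `A ∪ B`. -/
lemma dirForm_eq_add_of_isEqPotential {H : Type*} [Fintype H] [DecidableEq H]
    {r : H → H → ℝ} {μ : H → ℝ} (hrev : ∀ x y, μ x * r x y = μ y * r y x)
    {A B : Finset H} {h : H → ℝ} (hh : IsEqPotential r A B h)
    {f : H → ℝ} (hfA : ∀ x ∈ A, f x = 1) (hfB : ∀ x ∈ B, f x = 0) :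
    dirForm μ r f = dirForm μ r h + dirForm μ r (f - h) := by
  obtain ⟨hhA, hhB, hharm⟩ := hh
  have hcross : ∑ x, μ x * (f - h) x * (-jumpGen r h x) = 0 := by
    refine Finset.sum_eq_zero fun x _ => ?_
    by_cases hx : x ∈ A ∪ B
    · rcases Finset.mem_union.1 hx with hx | hx
      · simp [hfA x hx, hhA x hx]
      · simp [hfB x hx, hhB x hx]
    · simp [hharm x hx]
  rw [sum_mul_neg_jumpGen hrev] at hcross
  have hexp : ∑ x, ∑ y, μ x * r x y * (f y - f x) ^ 2 =
      ∑ x, ∑ y, μ x * r x y * (h y - h x) ^ 2 +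
      ∑ x, ∑ y, μ x * r x y * ((f - h) y - (f - h) x) ^ 2 +
      2 * ∑ x, ∑ y, μ x * r x y * (((f - h) y - (f - h) x) * (h y - h x)) := by
    simp only [Finset.mul_sum, ← Finset.sum_add_distrib, Pi.sub_apply]
    exact Finset.sum_congr rfl fun x _ => Finset.sum_congr rfl fun y _ => by ring
  simp only [dirForm_eq_half_sum_sq hrev]
  linarith

lemma dirForm_nonneg {H : Type*} [Fintype H] {r : H → H → ℝ} {μ : H → ℝ}
    (hr_nonneg : ∀ x y, 0 ≤ r x y) (hμ_pos : ∀ x, 0 < μ x)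
    (hrev : ∀ x y, μ x * r x y = μ y * r y x) (g : H → ℝ) : 0 ≤ dirForm μ r g := by
  rw [dirForm_eq_half_sum_sq hrev]
  exact mul_nonneg (by norm_num) (Finset.sum_nonneg fun x _ => Finset.sum_nonneg fun y _ =>
    mul_nonneg (mul_nonneg (hμ_pos x).le (hr_nonneg x y)) (sq_nonneg _))

/-- By irreducibility, only constant functions have zero energy. -/
lemma eq_of_dirForm_eq_zero {H : Type*} [Fintype H] {r : H → H → ℝ} {μ : H → ℝ}
    (hr_nonneg : ∀ x y, 0 ≤ r x y) (hirr : IrreducibleRates r) (hμ_pos : ∀ x, 0 < μ x)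
    (hrev : ∀ x y, μ x * r x y = μ y * r y x) {g : H → ℝ} (hg : dirForm μ r g = 0)
    (x y : H) : g x = g y := by
  have hterm : ∀ x y, 0 ≤ μ x * r x y * (g y - g x) ^ 2 := fun x y =>
    mul_nonneg (mul_nonneg (hμ_pos x).le (hr_nonneg x y)) (sq_nonneg _)
  have hedge : ∀ x y, 0 < r x y → g y = g x := by
    intro x y hxy
    have hsum : ∑ x, ∑ y, μ x * r x y * (g y - g x) ^ 2 = 0 := by
      rw [dirForm_eq_half_sum_sq hrev] at hg
      linarith
    have hx := (Finset.sum_eq_zero_iff_of_nonneg fun x _ =>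
      Finset.sum_nonneg fun y _ => hterm x y).1 hsum x (Finset.mem_univ x)
    have hy := (Finset.sum_eq_zero_iff_of_nonneg fun y _ => hterm x y).1 hx y
      (Finset.mem_univ y)
    have hc : μ x * r x y ≠ 0 := (mul_pos (hμ_pos x) hxy).ne'
    exact sub_eq_zero.1 (pow_eq_zero_iff two_ne_zero |>.1 ((mul_eq_zero.1 hy).resolve_left hc))
  rcases eq_or_ne x y with rfl | hne
  · rfl
  obtain ⟨n, z, rfl, rfl, hz⟩ := hirr x y hne
  have hpath : ∀ i ≤ n, g (z i) = g (z 0) := by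
    intro i
    induction i with
    | zero => intro _; rfl
    | succ i ih => intro hi; rw [hedge _ _ (hz i hi), ih (Nat.le_of_succ_le hi)]
  exact (hpath n le_rfl).symm

/-- **Dirichlet principle for reversible Markov chains.**
Assuming detailed balance, for any disjoint nonempty `A, B` and any
`f ∈ C_{1,0}(A,B)`, one has `𝓓(f) ≥ cap(A,B) = 𝓓(h_{A,B})`, with equality iff
`f = h_{A,B}`.  Hence `cap(A,B) = inf 𝓓` over `C_{1,0}(A,B)`, attained uniquely
at the equilibrium potential. -/
theorem dirichlet_principle_reversible
    {H : Type*} [Fintype H] [DecidableEq H] [Nonempty H]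
    (r : H → H → ℝ) (μ : H → ℝ)
    (hr_nonneg : ∀ x y, 0 ≤ r x y) (hr_diag : ∀ x, r x x = 0)
    (hirr : IrreducibleRates r)
    (hμ_pos : ∀ x, 0 < μ x) (hμ_sum : ∑ x, μ x = 1)
    (hstat : ∀ y, ∑ x, μ x * r x y = μ y * ∑ x, r y x)
    (hrev : ∀ x y, μ x * r x y = μ y * r y x)
    (A B : Finset H) (hA : A.Nonempty) (hB : B.Nonempty) (hAB : Disjoint A B)
    (h : H → ℝ) (hh : IsEqPotential r A B h)
    (f : H → ℝ) (hfA : ∀ x ∈ A, f x = 1) (hfB : ∀ x ∈ B, f x = 0) :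
    dirForm μ r h ≤ dirForm μ r f ∧ (dirForm μ r f = dirForm μ r h ↔ f = h) := by
  have hdec := dirForm_eq_add_of_isEqPotential hrev hh hfA hfB
  have hnn := dirForm_nonneg hr_nonneg hμ_pos hrev (f - h)
  refine ⟨by linarith, fun heq => ?_, fun heq => by rw [heq]⟩
  have hzero : dirForm μ r (f - h) = 0 := by linarith
  obtain ⟨a, ha⟩ := hA
  funext x
  have hx := eq_of_dirForm_eq_zero hr_nonneg hirr hμ_pos hrev hzero x a
  simp only [Pi.sub_apply, hfA a ha, hh.1 a ha, sub_self] at hx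
  linarith
end

section
/- Thomson principle for reversible Markov chains: assume detailed balance. For any disjoint nonempty A, B ⊆ 𝓗, one has cap(A,B) > 0, and every unit flow φ ∈ 𝔘₁(A,B) satisfies cap(A,B)·‖φ‖² ≥ 1, with equality if and only if φ = ψ_{A,B} := −Ψ_{h_{A,B}}/cap(A,B). Consequently cap(A,B) = sup_{φ ∈ 𝔘₁(A,B)} 1/‖φ‖², with unique maximizer ψ_{A,B}. -/
/-! The potential `h` is `1` on `A` and `0` on `B`, so summation by parts
(`sum_mul_divg`) shows that pairing a flow `φ ∈ 𝔘₁(A,B)` with the gradient of `h` gives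
`-(1/2) ∑ φ(x,y) (h y - h x) = (div φ)(A) = 1`. With `D = 𝓓(h)` and `ψ = -Ψ_h / D`, this says that
`⟨φ, ψ⟩ = 1/D` for every unit flow, while `‖ψ‖² = 1/D`. Expanding the square gives
`‖φ - ψ‖² = ‖φ‖² - 1/D` (`flowNormSq_sub`), from which the inequality and the case of equality are
immediate. Under detailed balance `div Ψ_h = μ · 𝓛h`, so `ψ` is itself a unit flow, and `D > 0`
because `D = 0` would force `h` to be constant along every chain of positive rates. -/

open Finset

section Thomson

variable {H : Type*}

lemma conductS_eq {μ : H → ℝ} {r : H → H → ℝ} (hrev : ∀ x y, μ x * r x y = μ y * r y x)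
    (x y : H) : conductS μ r x y = μ x * r x y := by
  simp only [conductS, conduct, ← hrev x y]; ring

lemma conductS_comm (μ : H → ℝ) (r : H → H → ℝ) (x y : H) :
    conductS μ r x y = conductS μ r y x := by
  simp only [conductS]; ring

lemma PsiF_antisymm (μ : H → ℝ) (r : H → H → ℝ) (f : H → ℝ) (x y : H) :
    PsiF μ r f x y = -PsiF μ r f y x := by
  simp only [PsiF, conductS_comm μ r y x]; ring

/-- Summation by parts: the divergence is minus the adjoint of the gradient. -/
lemma sum_mul_divg [Fintype H] {φ : H → H → ℝ} (hφ : ∀ x y, φ x y = -φ y x) (f : H → ℝ) :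
    ∑ x, f x * divg φ x = -((1 / 2) * ∑ x, ∑ y, φ x y * (f y - f x)) := by
  have e1 : ∑ x, f x * divg φ x = ∑ x, ∑ y, φ x y * f x := by
    simp only [divg, Finset.mul_sum, mul_comm]
  have e2 : ∑ x, ∑ y, φ x y * f y = -∑ x, ∑ y, φ x y * f x := by
    rw [Finset.sum_comm]
    simp only [← Finset.sum_neg_distrib]
    refine Finset.sum_congr rfl fun y _ => Finset.sum_congr rfl fun x _ => ?_
    rw [hφ x y]; ring
  simp only [mul_sub, Finset.sum_sub_distrib]
  rw [e1, e2]; ring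

lemma sum_divg [Fintype H] {φ : H → H → ℝ} (hφ : ∀ x y, φ x y = -φ y x) :
    ∑ x, divg φ x = 0 := by
  simpa using sum_mul_divg hφ (fun _ => 1)

lemma divg_PsiF [Fintype H] {μ : H → ℝ} {r : H → H → ℝ}
    (hrev : ∀ x y, μ x * r x y = μ y * r y x) (f : H → ℝ) (x : H) :
    divg (PsiF μ r f) x = μ x * jumpGen r f x := by
  simp only [divg, PsiF, jumpGen, Finset.mul_sum, conductS_eq hrev, mul_assoc]

lemma dirForm_eq_divg [Fintype H] {μ : H → ℝ} {r : H → H → ℝ}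
    (hrev : ∀ x y, μ x * r x y = μ y * r y x) (f : H → ℝ) :
    dirForm μ r f = -∑ x, f x * divg (PsiF μ r f) x := by
  simp only [dirForm, divg_PsiF hrev, ← Finset.sum_neg_distrib]
  exact Finset.sum_congr rfl fun x _ => by ring

lemma dirForm_eq_sum_sq [Fintype H] {μ : H → ℝ} {r : H → H → ℝ}
    (hrev : ∀ x y, μ x * r x y = μ y * r y x) (f : H → ℝ) :
    dirForm μ r f = (1 / 2) * ∑ x, ∑ y, conductS μ r x y * (f y - f x) ^ 2 := by
  rw [dirForm_eq_divg hrev, sum_mul_divg (PsiF_antisymm μ r f), neg_neg]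
  simp only [PsiF, pow_two, mul_assoc]

/-- By irreducibility, the Dirichlet form vanishes only on constant functions. -/
lemma dirForm_pos [Fintype H] {μ : H → ℝ} {r : H → H → ℝ}
    (hr : ∀ x y, 0 ≤ r x y) (hirr : IrreducibleRates r) (hμ : ∀ x, 0 < μ x)
    (hrev : ∀ x y, μ x * r x y = μ y * r y x) {f : H → ℝ} {a b : H} (hab : f a ≠ f b) :
    0 < dirForm μ r f := by
  have hnn : ∀ x y, 0 ≤ conductS μ r x y * (f y - f x) ^ 2 := fun x y => by
    rw [conductS_eq hrev]
    exact mul_nonneg (mul_nonneg (hμ x).le (hr x y)) (sq_nonneg _)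
  rw [dirForm_eq_sum_sq hrev]
  by_contra hle
  have hS : ∑ x, ∑ y, conductS μ r x y * (f y - f x) ^ 2 = 0 :=
    le_antisymm (by linarith) (Finset.sum_nonneg fun x _ => Finset.sum_nonneg fun y _ => hnn x y)
  have hstep : ∀ x y, 0 < r x y → f y = f x := fun x y hxy => by
    have h1 := (Finset.sum_eq_zero_iff_of_nonneg
      (fun x _ => Finset.sum_nonneg fun y _ => hnn x y)).1 hS x (Finset.mem_univ x)
    have h2 := (Finset.sum_eq_zero_iff_of_nonneg (fun y _ => hnn x y)).1 h1 y (Finset.mem_univ y)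
    rw [conductS_eq hrev] at h2
    have h3 := (mul_eq_zero.1 h2).resolve_left (mul_pos (hμ x) hxy).ne'
    exact sub_eq_zero.1 (pow_eq_zero_iff (two_ne_zero) |>.1 h3)
  obtain ⟨n, z, h0, hn, hz⟩ := hirr a b (fun e => hab (congrArg f e))
  have hconst : ∀ i ≤ n, f (z i) = f a := by
    intro i
    induction i with
    | zero => intro _; rw [h0]
    | succ k ih => intro hk; rw [hstep _ _ (hz k hk), ih (by omega)]
  exact hab (by rw [← hn, hconst n le_rfl])

/-- Since `h` is the indicator of `A` on `A ∪ B`, integrating it against a divergence supported in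
`A ∪ B` picks out the divergence of `A`. -/
lemma sum_potential_mul_divg [Fintype H] [DecidableEq H] {r : H → H → ℝ} {A B : Finset H}
    {h : H → ℝ} (hh : IsEqPotential r A B h) {φ : H → H → ℝ}
    (hφ : ∀ x, x ∉ A ∪ B → divg φ x = 0) :
    ∑ x, h x * divg φ x = ∑ x ∈ A, divg φ x := by
  rw [← Finset.sum_subset (Finset.subset_univ A)]
  · exact Finset.sum_congr rfl fun x hx => by rw [hh.1 x hx, one_mul]
  · intro x _ hxA
    by_cases hxB : x ∈ B
    · rw [hh.2.1 x hxB, zero_mul]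
    · rw [hφ x (by simp [hxA, hxB]), mul_zero]

lemma flowNormSq_nonneg [Fintype H] (μ : H → ℝ) (r : H → H → ℝ) (φ : H → H → ℝ) :
    0 ≤ flowNormSq μ r φ := by
  refine mul_nonneg (by norm_num) (Finset.sum_nonneg fun x _ => Finset.sum_nonneg fun y _ => ?_)
  split_ifs with hc
  · positivity
  · exact le_rfl

lemma eq_zero_of_flowNormSq_eq_zero [Fintype H] {μ : H → ℝ} {r : H → H → ℝ} {φ : H → H → ℝ}
    (hc : ∀ x y, 0 ≤ conductS μ r x y) (hφ : ∀ x y, conductS μ r x y = 0 → φ x y = 0)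
    (h0 : flowNormSq μ r φ = 0) (x y : H) : φ x y = 0 := by
  have hnn : ∀ x y, 0 ≤ if 0 < conductS μ r x y then φ x y ^ 2 / conductS μ r x y else 0 := by
    intro x y
    split_ifs with hc
    · positivity
    · exact le_rfl
  have hS := (mul_eq_zero.1 h0).resolve_left (by norm_num)
  have h1 := (Finset.sum_eq_zero_iff_of_nonneg
    (fun x _ => Finset.sum_nonneg fun y _ => hnn x y)).1 hS x (Finset.mem_univ x)
  have h2 := (Finset.sum_eq_zero_iff_of_nonneg (fun y _ => hnn x y)).1 h1 y (Finset.mem_univ y)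
  rcases (hc x y).eq_or_lt with hxy | hxy
  · exact hφ x y hxy.symm
  · rw [if_pos hxy] at h2
    simpa [hxy.ne'] using h2

/-- Expansion of `‖φ + Ψ_f / D‖²`, where the gradient flow `Ψ_f` turns the cross term into the
pairing of `φ` with the gradient of `f`. -/
lemma flowNormSq_sub [Fintype H] {μ : H → ℝ} {r : H → H → ℝ} {φ : H → H → ℝ}
    (hrev : ∀ x y, μ x * r x y = μ y * r y x)
    (hc : ∀ x y, 0 ≤ conductS μ r x y) (hφ : ∀ x y, conductS μ r x y = 0 → φ x y = 0)
    (f : H → ℝ) (D : ℝ) :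
    flowNormSq μ r (fun x y => φ x y - -(PsiF μ r f x y) / D) =
      flowNormSq μ r φ + 2 / D * ((1 / 2) * ∑ x, ∑ y, φ x y * (f y - f x))
        + dirForm μ r f / D ^ 2 := by
  have key : ∀ x y, (if 0 < conductS μ r x y then
      (φ x y - -(PsiF μ r f x y) / D) ^ 2 / conductS μ r x y else 0) =
      (if 0 < conductS μ r x y then φ x y ^ 2 / conductS μ r x y else 0)
        + 2 / D * (φ x y * (f y - f x))
        + 1 / D ^ 2 * (conductS μ r x y * (f y - f x) ^ 2) := by
    intro x y
    rcases (hc x y).eq_or_lt with hxy | hxy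
    · simp [← hxy, hφ x y hxy.symm]
    · rw [if_pos hxy, if_pos hxy, PsiF]
      have hne := hxy.ne'
      generalize conductS μ r x y = c at *
      rw [neg_div, sub_neg_eq_add, div_eq_mul_inv _ D, div_eq_mul_inv 2 D, one_div, ← inv_pow]
      field_simp
      ring
  rw [dirForm_eq_sum_sq hrev]
  simp only [flowNormSq, key, Finset.sum_add_distrib, ← Finset.mul_sum]
  ring

end Thomson

/-- **Thomson principle for reversible Markov chains.**
Assuming detailed balance: `cap(A,B) > 0`, the flow
`ψ_{A,B} = -Ψ_{h_{A,B}} / cap(A,B)` is a unit flow between `A` and `B`, and every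
unit flow `φ ∈ 𝔘₁(A,B)` satisfies `cap(A,B) · ‖φ‖² ≥ 1` with equality iff
`φ = ψ_{A,B}`.  Hence `cap(A,B) = sup_{φ ∈ 𝔘₁(A,B)} 1/‖φ‖²` with unique
maximizer `ψ_{A,B}`. -/
theorem thomson_principle_reversible
    {H : Type*} [Fintype H] [DecidableEq H] [Nonempty H]
    (r : H → H → ℝ) (μ : H → ℝ)
    (hr_nonneg : ∀ x y, 0 ≤ r x y) (hr_diag : ∀ x, r x x = 0)
    (hirr : IrreducibleRates r)
    (hμ_pos : ∀ x, 0 < μ x) (hμ_sum : ∑ x, μ x = 1)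
    (hstat : ∀ y, ∑ x, μ x * r x y = μ y * ∑ x, r y x)
    (hrev : ∀ x y, μ x * r x y = μ y * r y x)
    (A B : Finset H) (hA : A.Nonempty) (hB : B.Nonempty) (hAB : Disjoint A B)
    (h : H → ℝ) (hh : IsEqPotential r A B h) :
    0 < dirForm μ r h ∧
    InFlowClass μ r 1 A B (fun x y => -(PsiF μ r h x y) / dirForm μ r h) ∧
    ∀ φ : H → H → ℝ, InFlowClass μ r 1 A B φ →
      1 ≤ dirForm μ r h * flowNormSq μ r φ ∧
      (dirForm μ r h * flowNormSq μ r φ = 1 ↔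
        φ = fun x y => -(PsiF μ r h x y) / dirForm μ r h) := by
  obtain ⟨a, ha⟩ := hA
  obtain ⟨b, hb⟩ := hB
  have hD : 0 < dirForm μ r h :=
    dirForm_pos hr_nonneg hirr hμ_pos hrev (a := a) (b := b)
      (by rw [hh.1 a ha, hh.2.1 b hb]; exact one_ne_zero)
  have hc : ∀ x y, 0 ≤ conductS μ r x y := fun x y => by
    rw [conductS_eq hrev]; exact mul_nonneg (hμ_pos x).le (hr_nonneg x y)
  have hdiv0 : ∀ x, x ∉ A ∪ B → divg (PsiF μ r h) x = 0 := fun x hx => by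
    rw [divg_PsiF hrev, hh.2.2 x hx, mul_zero]
  have hdivA : ∑ x ∈ A, divg (PsiF μ r h) x = -dirForm μ r h := by
    rw [← sum_potential_mul_divg hh hdiv0, dirForm_eq_divg hrev, neg_neg]
  -- The total divergence of a flow is zero, so what leaves `A` enters `B`.
  have hdivB : ∑ x ∈ B, divg (PsiF μ r h) x = dirForm μ r h := by
    have hAll := sum_divg (PsiF_antisymm μ r h)
    rw [← Finset.sum_subset (Finset.subset_univ (A ∪ B)) (fun x _ hx => hdiv0 x hx),
      Finset.sum_union hAB, hdivA] at hAll
    linarith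
  have hdivψ : ∀ x, divg (fun x y => -(PsiF μ r h x y) / dirForm μ r h) x
      = -divg (PsiF μ r h) x / dirForm μ r h := fun x => by
    simp only [divg, ← Finset.sum_div, Finset.sum_neg_distrib]
  have hψ0 : ∀ x y, conductS μ r x y = 0 → -(PsiF μ r h x y) / dirForm μ r h = 0 :=
    fun x y hxy => by simp [PsiF, hxy]
  refine ⟨hD, ⟨⟨fun x y => ?_, hψ0⟩, fun x hx => ?_, ?_, ?_⟩, fun φ hφ => ?_⟩
  · simp only [PsiF_antisymm μ r h x y]; ring
  · rw [hdivψ, hdiv0 x hx]; simp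
  · simp only [hdivψ, ← Finset.sum_div, Finset.sum_neg_distrib]
    rw [hdivA, neg_neg, div_self hD.ne']
  · simp only [hdivψ, ← Finset.sum_div, Finset.sum_neg_distrib]
    rw [hdivB, neg_div, div_self hD.ne']
  · obtain ⟨⟨hanti, hφ0⟩, hφdiv, hφA, -⟩ := hφ
    have hpair : (1 / 2) * ∑ x, ∑ y, φ x y * (h y - h x) = -1 := by
      have h1 := sum_mul_divg hanti h
      rw [sum_potential_mul_divg hh hφdiv, hφA] at h1
      linarith
    have hexp := flowNormSq_sub hrev hc hφ0 h (dirForm μ r h)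
    rw [hpair] at hexp
    have hmain : dirForm μ r h * flowNormSq μ r φ = 1 + dirForm μ r h *
        flowNormSq μ r (fun x y => φ x y - -(PsiF μ r h x y) / dirForm μ r h) := by
      rw [hexp]
      have hne := hD.ne'
      field_simp
      ring
    have hnn := mul_nonneg hD.le (flowNormSq_nonneg μ r
      (fun x y => φ x y - -(PsiF μ r h x y) / dirForm μ r h))
    refine ⟨by linarith, fun heq => ?_, fun heq => ?_⟩
    · have hz : flowNormSq μ r (fun x y => φ x y - -(PsiF μ r h x y) / dirForm μ r h) = 0 :=
        (mul_eq_zero.1 (by linarith)).resolve_left hD.ne'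
      funext x y
      exact sub_eq_zero.1 (eq_zero_of_flowNormSq_eq_zero hc
        (fun x y hxy => by rw [hφ0 x y hxy, hψ0 x y hxy, sub_zero]) hz x y)
    · have hz : flowNormSq μ r (fun x y => φ x y - -(PsiF μ r h x y) / dirForm μ r h) = 0 := by
        rw [heq]; simp [flowNormSq]
      rw [hmain, hz, mul_zero, add_zero]
end

section
/- Symmetry of capacity under time reversal: for any disjoint nonempty A, B ⊆ 𝓗, the capacity of the chain equals the capacity of its adjoint chain, i.e., 𝓓(h_{A,B}) = 𝓓(h†_{A,B}) (in symbols, cap(A,B) = cap†(A,B)). -/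
/-!
Write `⟨f, g⟩ = ∑ x, μ x * f x * g x`. Stationarity of `μ` makes `𝓛†` the adjoint of `𝓛` for this
pairing (`sum_mul_jumpGen_eq_sum_mul_jumpGen_radj`). Since `𝓛 h` and `𝓛† h†` vanish off `A ∪ B`,
where `h` and `h†` agree, the first argument of each pairing may be exchanged:
`𝓓(h) = ⟨h, -𝓛 h⟩ = ⟨h†, -𝓛 h⟩ = ⟨h, -𝓛† h†⟩ = ⟨h†, -𝓛† h†⟩ = 𝓓(h†)`,
the last step being adjointness with both arguments equal to `h†`.
-/

open Finset

/-- `𝓛†` is the adjoint of `𝓛` in `L²(μ)`: the off-diagonal terms match by exchanging the two sums,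
the diagonal terms by stationarity. -/
theorem sum_mul_jumpGen_eq_sum_mul_jumpGen_radj {H : Type*} [Fintype H]
    (r : H → H → ℝ) (μ : H → ℝ) (hμ_pos : ∀ x, 0 < μ x)
    (hstat : ∀ y, ∑ x, μ x * r x y = μ y * ∑ x, r y x) (f g : H → ℝ) :
    ∑ x, μ x * f x * jumpGen r g x = ∑ x, μ x * g x * jumpGen (radj μ r) f x := by
  have hleft : ∀ x, μ x * f x * jumpGen r g x
      = ∑ y, μ x * r x y * f x * g y - f x * g x * (μ x * ∑ y, r x y) := by
    intro x
    simp only [jumpGen, Finset.mul_sum, ← Finset.sum_sub_distrib]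
    exact Finset.sum_congr rfl fun y _ => by ring
  have hright : ∀ x, μ x * g x * jumpGen (radj μ r) f x
      = ∑ y, μ y * r y x * f y * g x - f x * g x * ∑ y, μ y * r y x := by
    intro x
    have hx := (hμ_pos x).ne'
    simp only [jumpGen, radj, Finset.mul_sum, ← Finset.sum_sub_distrib]
    exact Finset.sum_congr rfl fun y _ => by field_simp
  simp only [hleft, hright, hstat, Finset.sum_sub_distrib]
  rw [Finset.sum_comm]

/-- Pairing with `𝓛 h` for an equilibrium potential `h` only sees the values on `A ∪ B`. -/
theorem IsEqPotential.sum_mul_jumpGen_congr {H : Type*} [Fintype H] [DecidableEq H]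
    {r : H → H → ℝ} {A B : Finset H} {h : H → ℝ} (hh : IsEqPotential r A B h)
    (μ : H → ℝ) {f g : H → ℝ} (hfg : ∀ x ∈ A ∪ B, f x = g x) :
    ∑ x, μ x * f x * jumpGen r h x = ∑ x, μ x * g x * jumpGen r h x := by
  refine Finset.sum_congr rfl fun x _ => ?_
  by_cases hx : x ∈ A ∪ B
  · rw [hfg x hx]
  · simp [hh.2.2 x hx]

/-- **Symmetry of the capacity under time reversal**: the capacity of the chain
equals the capacity of its adjoint chain, `cap(A,B) = cap†(A,B)`, i.e.
`𝓓(h_{A,B}) = 𝓓(h†_{A,B})`. -/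
theorem capacity_time_reversal_symmetry
    {H : Type*} [Fintype H] [DecidableEq H] [Nonempty H]
    (r : H → H → ℝ) (μ : H → ℝ)
    (hr_nonneg : ∀ x y, 0 ≤ r x y) (hr_diag : ∀ x, r x x = 0)
    (hirr : IrreducibleRates r)
    (hμ_pos : ∀ x, 0 < μ x) (hμ_sum : ∑ x, μ x = 1)
    (hstat : ∀ y, ∑ x, μ x * r x y = μ y * ∑ x, r y x)
    (A B : Finset H) (hA : A.Nonempty) (hB : B.Nonempty) (hAB : Disjoint A B)
    (h hdag : H → ℝ) (hh : IsEqPotential r A B h)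
    (hhdag : IsEqPotential (radj μ r) A B hdag) :
    dirForm μ r h = dirForm μ r hdag := by
  have hagree : ∀ x ∈ A ∪ B, h x = hdag x := by
    intro x hx
    rcases Finset.mem_union.mp hx with hxA | hxB
    · rw [hh.1 x hxA, hhdag.1 x hxA]
    · rw [hh.2.1 x hxB, hhdag.2.1 x hxB]
  simp only [dirForm, mul_neg, Finset.sum_neg_distrib]
  rw [hh.sum_mul_jumpGen_congr μ hagree,
    sum_mul_jumpGen_eq_sum_mul_jumpGen_radj r μ hμ_pos hstat hdag h,
    hhdag.sum_mul_jumpGen_congr μ hagree,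
    sum_mul_jumpGen_eq_sum_mul_jumpGen_radj r μ hμ_pos hstat hdag hdag]
end

section
/- Bound on the equilibrium potential via capacities: for any disjoint nonempty A, B ⊆ 𝓗 and any x ∈ 𝓗 with x ∉ A ∪ B, one has h_{A,B}(x) ≤ cap({x},A)/cap({x},A∪B); here cap({x},A∪B) > 0 by irreducibility, so the quotient is well defined. -/
/-!
The proof is a comparison argument. Write `u = h_{x, A ∪ B}` and `g = h_{x, A}`. The function
`h - h x • u` vanishes at `x` and on `B`, equals `1` on `A`, and is harmonic off `A ∪ B ∪ {x}`; the
function `1 - g` vanishes at `x`, equals `1` on `A`, is nonnegative on `B`, and is harmonic there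
too. By the maximum principle (`nonpos_of_harmonic_off`) the first lies below the second. Both vanish
at `x`, so their generators at `x` are ordered in the same way, and since `𝓛 h x = 0` this reads
`h x * (-𝓛 u x) ≤ -𝓛 g x`. Multiplying by `μ x` gives the bound, because
`cap({x}, C) = μ x * (-𝓛 h_{x, C} x)` (`dirForm_eqPotential_singleton`).

Positivity of the capacity is again the maximum principle: if `𝓛 u x` vanished, `u` would be
harmonic off `A ∪ B` and zero on `A ∪ B`, contradicting `u x = 1`.
-/

open Finset

/-- Maximum principle: a function that is harmonic off a nonempty set `S` and nonpositive on `S` is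
nonpositive everywhere. A positive maximum would propagate along a path of positive rates until it
reaches `S`. -/
lemma nonpos_of_harmonic_off {H : Type*} [Fintype H] (r : H → H → ℝ)
    (hr : ∀ x y, 0 ≤ r x y) (hirr : IrreducibleRates r)
    (S : Finset H) (hS : S.Nonempty) (f : H → ℝ)
    (hfS : ∀ y ∈ S, f y ≤ 0) (hf : ∀ y, y ∉ S → jumpGen r f y = 0) (y : H) : f y ≤ 0 := by
  obtain ⟨s, hs⟩ := hS
  obtain ⟨m, -, hm⟩ := Finset.exists_max_image Finset.univ f ⟨s, Finset.mem_univ s⟩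
  by_contra! hy
  have hmpos : 0 < f m := hy.trans_le (hm y (Finset.mem_univ y))
  have hms : m ≠ s := by
    rintro rfl
    exact absurd (hfS m hs) (not_le.2 hmpos)
  obtain ⟨n, z, hz0, hzn, hz⟩ := hirr m s hms
  have key : ∀ i, i ≤ n → f (z i) = f m := by
    intro i
    induction i with
    | zero => intro _; rw [hz0]
    | succ k ih =>
      intro hk
      have hfk := ih (by omega)
      have hkS : z k ∉ S := fun hc => by
        have := hfS _ hc
        linarith
      have hL := hf _ hkS
      unfold jumpGen at hL
      have hterm : ∀ w ∈ Finset.univ, r (z k) w * (f w - f (z k)) ≤ 0 := fun w hw =>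
        mul_nonpos_of_nonneg_of_nonpos (hr _ _) (by have := hm w hw; linarith)
      have h0 := (Finset.sum_eq_zero_iff_of_nonpos hterm).1 hL (z (k + 1)) (Finset.mem_univ _)
      rcases mul_eq_zero.1 h0 with h1 | h1
      · exact absurd h1 (hz k (by omega)).ne'
      · linarith
  have h1 := key n le_rfl
  have h2 := hfS s hs
  rw [hzn] at h1
  linarith

lemma dirForm_eqPotential_singleton {H : Type*} [Fintype H] [DecidableEq H]
    (r : H → H → ℝ) (μ : H → ℝ) (x : H) (C : Finset H) (u : H → ℝ)
    (hu : IsEqPotential r {x} C u) : dirForm μ r u = μ x * (-jumpGen r u x) := by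
  obtain ⟨h1, h0, hL⟩ := hu
  unfold dirForm
  rw [Finset.sum_eq_single x]
  · rw [h1 x (Finset.mem_singleton_self x), mul_one]
  · intro y _ hy
    by_cases hyC : y ∈ C
    · rw [h0 y hyC]; ring
    · rw [hL y (by simp [hy, hyC])]; ring
  · intro hx
    exact absurd (Finset.mem_univ x) hx

/-- `𝓛` is linear and kills constants; this is the combination occurring in the proof. -/
lemma jumpGen_comb {H : Type*} [Fintype H] (r : H → H → ℝ) (f u g : H → ℝ) (a c : ℝ) (y : H) :
    jumpGen r (fun z => f z - a * u z + g z - c) y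
      = jumpGen r f y - a * jumpGen r u y + jumpGen r g y := by
  unfold jumpGen
  rw [Finset.mul_sum, ← Finset.sum_sub_distrib, ← Finset.sum_add_distrib]
  exact Finset.sum_congr rfl fun z _ => by ring

lemma jumpGen_sub_const {H : Type*} [Fintype H] (r : H → H → ℝ) (f : H → ℝ) (c : ℝ) (y : H) :
    jumpGen r (fun z => f z - c) y = jumpGen r f y := by
  unfold jumpGen
  exact Finset.sum_congr rfl fun z _ => by ring

lemma jumpGen_nonpos_of_max {H : Type*} [Fintype H] (r : H → H → ℝ)
    (hr : ∀ x y, 0 ≤ r x y) (f : H → ℝ) (x : H) (hf : ∀ y, f y ≤ f x) : jumpGen r f x ≤ 0 :=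
  Finset.sum_nonpos fun y _ =>
    mul_nonpos_of_nonneg_of_nonpos (hr _ _) (sub_nonpos.2 (hf y))

lemma eqPotential_singleton_le_one {H : Type*} [Fintype H] [DecidableEq H] (r : H → H → ℝ)
    (hr : ∀ x y, 0 ≤ r x y) (hirr : IrreducibleRates r) (x : H) (C : Finset H) (u : H → ℝ)
    (hu : IsEqPotential r {x} C u) (y : H) : u y ≤ 1 := by
  obtain ⟨h1, h0, hL⟩ := hu
  have := nonpos_of_harmonic_off r hr hirr ({x} ∪ C) ⟨x, by simp⟩ (fun z => u z - 1)
    (fun z hz => by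
      rcases Finset.mem_union.1 hz with hz | hz
      · simp [h1 z hz]
      · simp [h0 z hz])
    (fun z hz => by rw [jumpGen_sub_const, hL z hz]) y
  linarith

/-- **Bound on the equilibrium potential via capacities**: for `x ∉ A ∪ B`,
`cap({x}, A ∪ B) > 0` and `h_{A,B}(x) ≤ cap({x},A) / cap({x},A∪B)`. -/
theorem equilibrium_potential_capacity_bound
    {H : Type*} [Fintype H] [DecidableEq H] [Nonempty H]
    (r : H → H → ℝ) (μ : H → ℝ)
    (hr_nonneg : ∀ x y, 0 ≤ r x y) (hr_diag : ∀ x, r x x = 0)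
    (hirr : IrreducibleRates r)
    (hμ_pos : ∀ x, 0 < μ x) (hμ_sum : ∑ x, μ x = 1)
    (hstat : ∀ y, ∑ x, μ x * r x y = μ y * ∑ x, r y x)
    (A B : Finset H) (hA : A.Nonempty) (hB : B.Nonempty) (hAB : Disjoint A B)
    (x : H) (hx : x ∉ A ∪ B)
    (h : H → ℝ) (hh : IsEqPotential r A B h)
    (hxA : H → ℝ) (hhxA : IsEqPotential r {x} A hxA)
    (hxAB : H → ℝ) (hhxAB : IsEqPotential r {x} (A ∪ B) hxAB) :
    0 < dirForm μ r hxAB ∧ h x ≤ dirForm μ r hxA / dirForm μ r hxAB := by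
  have hu1 := eqPotential_singleton_le_one r hr_nonneg hirr x _ _ hhxAB
  have hg1 := eqPotential_singleton_le_one r hr_nonneg hirr x _ _ hhxA
  rw [dirForm_eqPotential_singleton r μ x _ _ hhxAB, dirForm_eqPotential_singleton r μ x _ _ hhxA]
  obtain ⟨hhA, hhB, hhL⟩ := hh
  obtain ⟨hg_x, hg_A, hgL⟩ := hhxA
  obtain ⟨hu_x, hu_AB, huL⟩ := hhxAB
  have hux : hxAB x = 1 := hu_x x (Finset.mem_singleton_self x)
  have hgx : hxA x = 1 := hg_x x (Finset.mem_singleton_self x)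
  have hneg : jumpGen r hxAB x < 0 := by
    refine lt_of_le_of_ne (jumpGen_nonpos_of_max r hr_nonneg _ x fun y => by
      rw [hux]; exact hu1 y) fun h0 => ?_
    have := nonpos_of_harmonic_off r hr_nonneg hirr (A ∪ B) (hA.mono Finset.subset_union_left) hxAB
      (fun y hy => (hu_AB y hy).le)
      (fun y hy => by
        by_cases hyx : y = x
        · rw [hyx, h0]
        · exact huL y (by
            rw [Finset.mem_union, Finset.mem_singleton]
            exact fun hc => hc.elim hyx hy)) x
    linarith
  have hcap : 0 < μ x * (-jumpGen r hxAB x) := mul_pos (hμ_pos x) (neg_pos.2 hneg)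
  refine ⟨hcap, ?_⟩
  have hcomp := nonpos_of_harmonic_off r hr_nonneg hirr ({x} ∪ (A ∪ B)) ⟨x, by simp⟩
    (fun z => h z - h x * hxAB z + hxA z - 1)
    (fun y hy => by
      rcases Finset.mem_union.1 hy with hy | hy
      · rw [Finset.mem_singleton.1 hy, hux, hgx]; linarith
      · rw [hu_AB y hy]
        rcases Finset.mem_union.1 hy with hy | hy
        · rw [hhA y hy, hg_A y hy]; linarith
        · rw [hhB y hy]; linarith [hg1 y])
    (fun y hy => by
      have hy' : y ≠ x ∧ y ∉ A ∧ y ∉ B := by simpa using hy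
      rw [jumpGen_comb, hhL y (by simp [hy'.2]), huL y hy, hgL y (by simp [hy'.1, hy'.2.1])]
      ring)
  have hLx := jumpGen_nonpos_of_max r hr_nonneg (fun z => h z - h x * hxAB z + hxA z - 1) x
    (fun y => by
      have hval : h x - h x * hxAB x + hxA x - 1 = 0 := by rw [hux, hgx]; ring
      simpa only [hval] using hcomp y)
  rw [jumpGen_comb, hhL x hx] at hLx
  rw [le_div_iff₀ hcap]
  have := mul_le_mul_of_nonneg_left hLx (hμ_pos x).le
  linarith
end

section
/- Comparison with the symmetrized chain, lower bound: for any disjoint nonempty A, B ⊆ 𝓗, the capacity of the symmetrized chain is at most that of the original chain: cap^s(A,B) ≤ cap(A,B), i.e., 𝓓(h^s_{A,B}) ≤ 𝓓(h_{A,B}). -/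
/-!
By stationarity the Dirichlet form is the quadratic energy
`𝓓(f) = ½ ∑ₓ ∑ᵧ c(x,y) (f y - f x)²` with `c(x,y) = μ(x) r(x,y)` (`dirForm_eq_energy`).
The symmetrized equilibrium potential `hs` minimizes this energy among functions with its boundary
values on `A ∪ B` (Dirichlet principle), and `h` is such a function. Concretely, `g = h - hs`
vanishes on `A ∪ B`, while `𝓛ˢ hs = 0` off `A ∪ B`, so summation by parts (`cross_energy_eq`) shows
that the cross term in the expansion of `𝓓(hs + g)` is zero, whence
`𝓓(h) = 𝓓(hs) + 𝓓(g) ≥ 𝓓(hs)`.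
-/

open Finset

lemma dirForm_eq_energy {H : Type*} [Fintype H] (r : H → H → ℝ) (μ : H → ℝ)
    (hstat : ∀ y, ∑ x, μ x * r x y = μ y * ∑ x, r y x) (f : H → ℝ) :
    dirForm μ r f = (1 / 2) * ∑ x, ∑ y, μ x * r x y * (f y - f x) ^ 2 := by
  -- Stationarity tested against `f ^ 2`.
  have hinv : ∑ x, ∑ y, μ x * r x y * f y ^ 2 = ∑ x, ∑ y, μ x * r x y * f x ^ 2 := by
    rw [Finset.sum_comm]
    refine Finset.sum_congr rfl fun y _ => ?_
    rw [← Finset.sum_mul, hstat y, Finset.mul_sum, Finset.sum_mul]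
  have hdir : dirForm μ r f = ∑ x, ∑ y, μ x * r x y * (f x ^ 2 - f x * f y) := by
    unfold dirForm jumpGen
    refine Finset.sum_congr rfl fun x _ => ?_
    rw [mul_neg, Finset.mul_sum, ← Finset.sum_neg_distrib]
    exact Finset.sum_congr rfl fun y _ => by ring
  have hsq : ∑ x, ∑ y, μ x * r x y * (f y - f x) ^ 2
      = ∑ x, ∑ y, μ x * r x y * f y ^ 2 - ∑ x, ∑ y, μ x * r x y * f x ^ 2
        + 2 * ∑ x, ∑ y, μ x * r x y * (f x ^ 2 - f x * f y) := by
    simp only [Finset.mul_sum, ← Finset.sum_sub_distrib, ← Finset.sum_add_distrib]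
    exact Finset.sum_congr rfl fun x _ => Finset.sum_congr rfl fun y _ => by ring
  rw [hdir, hsq, hinv]
  ring

/-- Summation by parts for the bilinear energy: it only sees the symmetrized generator. -/
lemma cross_energy_eq {H : Type*} [Fintype H] (r : H → H → ℝ) (μ : H → ℝ)
    (hμ_pos : ∀ x, 0 < μ x) (g s : H → ℝ) :
    ∑ x, ∑ y, μ x * r x y * ((g y - g x) * (s y - s x))
      = -2 * ∑ x, μ x * g x *
          jumpGen (fun x y => (μ x * r x y + μ y * r y x) / (2 * μ x)) s x := by
  have hswap : ∑ x, ∑ y, μ x * r x y * (g y * (s y - s x))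
      = ∑ x, ∑ y, μ y * r y x * (g x * (s x - s y)) := Finset.sum_comm
  have hsplit : ∑ x, ∑ y, μ x * r x y * ((g y - g x) * (s y - s x))
      = ∑ x, ∑ y, μ x * r x y * (g y * (s y - s x))
        - ∑ x, ∑ y, μ x * r x y * (g x * (s y - s x)) := by
    simp only [← Finset.sum_sub_distrib]
    exact Finset.sum_congr rfl fun x _ => Finset.sum_congr rfl fun y _ => by ring
  rw [hsplit, hswap]
  unfold jumpGen
  simp only [Finset.mul_sum, ← Finset.sum_sub_distrib]
  refine Finset.sum_congr rfl fun x _ => Finset.sum_congr rfl fun y _ => ?_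
  have := (hμ_pos x).ne'
  field_simp
  ring

/-- **Comparison with the symmetrized chain (lower bound)**:
`cap^s(A,B) ≤ cap(A,B)`, where `cap^s` is the capacity of the chain with
symmetrized rates `r^s(x,y) = (μ x * r x y + μ y * r y x)/(2 μ x)`. -/
theorem capacity_symmetrized_le
    {H : Type*} [Fintype H] [DecidableEq H] [Nonempty H]
    (r : H → H → ℝ) (μ : H → ℝ)
    (hr_nonneg : ∀ x y, 0 ≤ r x y) (hr_diag : ∀ x, r x x = 0)
    (hirr : IrreducibleRates r)
    (hμ_pos : ∀ x, 0 < μ x) (hμ_sum : ∑ x, μ x = 1)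
    (hstat : ∀ y, ∑ x, μ x * r x y = μ y * ∑ x, r y x)
    (A B : Finset H) (hA : A.Nonempty) (hB : B.Nonempty) (hAB : Disjoint A B)
    (h : H → ℝ) (hh : IsEqPotential r A B h)
    (hs : H → ℝ)
    (hhs : IsEqPotential (fun x y => (μ x * r x y + μ y * r y x) / (2 * μ x)) A B hs) :
    dirForm μ r hs ≤ dirForm μ r h := by
  obtain ⟨hA1, hB0, -⟩ := hh
  obtain ⟨sA1, sB0, hharm⟩ := hhs
  have hcross : ∑ x, ∑ y, μ x * r x y * (((h y - hs y) - (h x - hs x)) * (hs y - hs x)) = 0 := by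
    rw [cross_energy_eq r μ hμ_pos (fun x => h x - hs x) hs]
    refine mul_eq_zero_of_right _ (Finset.sum_eq_zero fun x _ => ?_)
    by_cases hx : x ∈ A ∪ B
    · rcases Finset.mem_union.mp hx with hxA | hxB
      · simp [hA1 x hxA, sA1 x hxA]
      · simp [hB0 x hxB, sB0 x hxB]
    · rw [hharm x hx, mul_zero]
  have hexpand : ∑ x, ∑ y, μ x * r x y * (h y - h x) ^ 2
      = ∑ x, ∑ y, μ x * r x y * (hs y - hs x) ^ 2
        + 2 * ∑ x, ∑ y, μ x * r x y * (((h y - hs y) - (h x - hs x)) * (hs y - hs x))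
        + ∑ x, ∑ y, μ x * r x y * ((h y - hs y) - (h x - hs x)) ^ 2 := by
    simp only [Finset.mul_sum, ← Finset.sum_add_distrib]
    exact Finset.sum_congr rfl fun x _ => Finset.sum_congr rfl fun y _ => by ring
  have hnonneg : 0 ≤ ∑ x, ∑ y, μ x * r x y * ((h y - hs y) - (h x - hs x)) ^ 2 :=
    Finset.sum_nonneg fun x _ => Finset.sum_nonneg fun y _ =>
      mul_nonneg (mul_nonneg (hμ_pos x).le (hr_nonneg x y)) (sq_nonneg _)
  rw [dirForm_eq_energy r μ hstat, dirForm_eq_energy r μ hstat, hexpand, hcross]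
  linarith
end

section
/- Contraction of the flow norm under collapsing: for every flow φ on 𝓗 and its collapsed flow φ̄ on 𝓗̄, one has ‖φ̄‖ ≤ ‖φ‖, where ‖φ̄‖² = (1/2)∑_{(x,y)∈𝓗̄×𝓗̄ : c̄^s(x,y)>0} φ̄(x,y)²/c̄^s(x,y). -/
/-! The collapsed norm splits into the pairs outside `E`, which are unchanged, and the pairs
`(x, 𝔢)`, `(𝔢, x)`, whose terms are `(∑ z ∈ E, φ x z)² / ∑ z ∈ E, c^s x z` up to transposition.
By Cauchy–Schwarz (`sq_sum_div_le`) each of these is at most the sum of the corresponding terms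
of the original norm. What the original norm contains in addition, the pairs inside `E`, is
nonnegative. -/

open Finset

section Setup

variable {H : Type*}

/-- The squared flow norm w.r.t. a symmetric conductance `cs`:
`(1/2) ∑_{(x,y) : cs(x,y) > 0} φ(x,y)² / cs(x,y)`. -/
noncomputable def normSqOf {X : Type*} [Fintype X] (cs : X → X → ℝ)
    (φ : X → X → ℝ) : ℝ :=
  (1 / 2) * ∑ x, ∑ y, if 0 < cs x y then φ x y ^ 2 / cs x y else 0

variable [DecidableEq H]

/-- Collapsing a matrix-valued quantity (conductance or flow) over the set `E`
to the single point `𝔢` (encoded as `none` in `Option {x : H // x ∉ E}`):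
entries among states outside `E` are unchanged, entries involving `𝔢` are
summed over `E`, and the `(𝔢,𝔢)` entry is `0`. -/
noncomputable def collapseMat (E : Finset H) (c : H → H → ℝ) :
    Option {x : H // x ∉ E} → Option {x : H // x ∉ E} → ℝ
  | some x, some y => c x.1 y.1
  | some x, none => ∑ z ∈ E, c x.1 z
  | none, some y => ∑ z ∈ E, c z y.1
  | none, none => 0

end Setup

/-- For a nonnegative conductance the condition `0 < cs x y` in `normSqOf` is redundant, because
division by zero gives zero. -/
lemma normSqOf_eq_of_nonneg {X : Type*} [Fintype X] {cs : X → X → ℝ} (hcs : ∀ x y, 0 ≤ cs x y)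
    (φ : X → X → ℝ) : normSqOf cs φ = (1 / 2) * ∑ x, ∑ y, φ x y ^ 2 / cs x y := by
  unfold normSqOf
  congr 1
  refine Finset.sum_congr rfl fun x _ => Finset.sum_congr rfl fun y _ => ?_
  split_ifs with h
  · rfl
  · simp [le_antisymm (not_lt.mp h) (hcs x y)]

/-- Cauchy–Schwarz in Engel form, where weights may vanish as long as `f` vanishes there too. -/
lemma sq_sum_div_le {ι : Type*} (s : Finset ι) (f g : ι → ℝ) (hg : ∀ i, 0 ≤ g i)
    (hfg : ∀ i, g i = 0 → f i = 0) :
    (∑ i ∈ s, f i) ^ 2 / ∑ i ∈ s, g i ≤ ∑ i ∈ s, f i ^ 2 / g i := by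
  have hq : ∀ i, 0 ≤ f i ^ 2 / g i := fun i => div_nonneg (sq_nonneg _) (hg i)
  refine div_le_of_le_mul₀ (Finset.sum_nonneg fun i _ => hg i)
    (Finset.sum_nonneg fun i _ => hq i) ?_
  refine Finset.sum_sq_le_sum_mul_sum_of_sq_le_mul s (fun i _ => hq i) (fun i _ => hg i) ?_
  intro i _
  by_cases h : g i = 0
  · simp [h, hfg i h]
  · exact (div_mul_cancel₀ _ h).ge

/-- Splits a double sum over `H` into the four blocks cut out by `E` and its complement. -/
lemma sum_sum_eq_blocks {H : Type*} [Fintype H] [DecidableEq H] (E : Finset H) (T : H → H → ℝ) :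
    ∑ x, ∑ y, T x y =
      (∑ x ∈ E, ∑ y ∈ E, T x y + ∑ y : {x // x ∉ E}, ∑ x ∈ E, T x y) +
      (∑ x : {x // x ∉ E}, ∑ y ∈ E, T x y +
        ∑ x : {x // x ∉ E}, ∑ y : {x // x ∉ E}, T x y) := by
  have split : ∀ f : H → ℝ, ∑ x, f x = ∑ x ∈ E, f x + ∑ x : {x // x ∉ E}, f x := by
    intro f
    rw [← Finset.sum_add_sum_compl E f]
    congr 1
    exact Finset.sum_subtype _ (by simp) f
  rw [split]
  simp only [split (T _), Finset.sum_add_distrib]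
  rw [Finset.sum_comm (s := E) (t := (Finset.univ : Finset {x // x ∉ E}))]

/-- **Contraction of the flow norm under collapsing**: for every flow `φ` on `𝓗`
and its collapsed flow `φ̄` on `𝓗̄ = (𝓗 ∖ E) ∪ {𝔢}`, one has `‖φ̄‖ ≤ ‖φ‖`
(equivalently, `‖φ̄‖² ≤ ‖φ‖²`), where the collapsed norm is taken with respect
to the collapsed symmetrized conductance `c̄^s`. -/
theorem collapsed_flow_norm_contraction
    {H : Type*} [Fintype H] [DecidableEq H]
    (r : H → H → ℝ) (μ : H → ℝ)
    (hr_nonneg : ∀ x y, 0 ≤ r x y) (hr_diag : ∀ x, r x x = 0)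
    (hμ_pos : ∀ x, 0 < μ x) (hμ_sum : ∑ x, μ x = 1)
    (hstat : ∀ y, ∑ x, μ x * r x y = μ y * ∑ x, r y x)
    (E : Finset H) (hE : E.Nonempty) (hEuniv : E ≠ Finset.univ)
    (φ : H → H → ℝ) (hφ : IsFlowOf μ r φ) :
    normSqOf
        (fun a b =>
          (collapseMat E (conduct μ r) a b + collapseMat E (conduct μ r) b a) / 2)
        (collapseMat E φ)
      ≤ normSqOf (conductS μ r) φ := by
  have hc : ∀ x y, 0 ≤ conduct μ r x y := fun x y => mul_nonneg (hμ_pos x).le (hr_nonneg x y)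
  have hcs : ∀ x y, 0 ≤ conductS μ r x y := fun x y =>
    div_nonneg (add_nonneg (hc x y) (hc y x)) zero_le_two
  have hcol : ∀ a b, 0 ≤ collapseMat E (conduct μ r) a b := by
    rintro (_ | a) (_ | b)
    · exact le_rfl
    · exact Finset.sum_nonneg fun z _ => hc _ _
    · exact Finset.sum_nonneg fun z _ => hc _ _
    · exact hc _ _
  rw [normSqOf_eq_of_nonneg hcs, normSqOf_eq_of_nonneg fun a b =>
    div_nonneg (add_nonneg (hcol a b) (hcol b a)) zero_le_two]
  refine mul_le_mul_of_nonneg_left ?_ (by norm_num)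
  rw [sum_sum_eq_blocks E, Fintype.sum_option]
  simp only [Fintype.sum_option, collapseMat, Finset.sum_add_distrib]
  refine add_le_add (add_le_add ?_ ?_) (add_le_add ?_ le_rfl)
  · simpa using Finset.sum_nonneg fun x _ => Finset.sum_nonneg fun y _ =>
      div_nonneg (sq_nonneg (φ x y)) (hcs x y)
  · refine Finset.sum_le_sum fun y _ => ?_
    rw [← Finset.sum_add_distrib, Finset.sum_div]
    exact sq_sum_div_le E (fun z => φ z y) (fun z => conductS μ r z y) (fun z => hcs z y)
      fun z => hφ.2 z y
  · refine Finset.sum_le_sum fun x _ => ?_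
    rw [← Finset.sum_add_distrib, Finset.sum_div]
    exact sq_sum_div_le E (φ x) (conductS μ r x) (hcs x) (hφ.2 x)
end

section
/- Energy barrier for the two-dimensional Ising model without external field: for integers K, L with 5 ≤ K ≤ L, (i) there exists a path ω₀ = ⊟, ω₁, …, ω_T = ⊞ with H(ω_t) ≤ 2K + 2 for all t, and (ii) every path from ⊟ to ⊞ contains a configuration ω_t with H(ω_t) ≥ 2K + 2. Hence the communication height Φ(⊟,⊞) := min over paths from ⊟ to ⊞ of max_t H(ω_t) equals Γ = 2K + 2. -/
/-!
Lower bound.  Call a row `{i} × ℤ/L` or a column `ℤ/K × {j}` mixed if the spin is not constant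
on it.  A mixed line is a cycle with at least two disagreeing edges (`two_le_cycle`), so if
`ham σ < 2K + 2` and there are `a` mixed rows and `b` mixed columns, then `a + b ≤ K`.
If all rows are mixed, no column is, and the number of plus sites is a multiple of `K`; if all
columns are mixed, then `K = L` and no row is mixed, with the same conclusion.  Otherwise
a constant row crosses a constant column, all constant lines carry one common spin, and the sites
of the opposite spin lie in an `a × b` box, so there are at most `ab ≤ K² / 4` of them
(`low_energy_structure`).  Along a path from `⊟` to `⊞` the number of plus sites grows by at most
one per step, hence takes the value `K * (K / 2) + 1`, which none of these alternatives permits.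

Upper bound.  Fill the torus column by column (`fillPath`).  Every row, and every column, meets the
plus set in an initial segment, so each row contributes at most two disagreeing edges, and the
single partially filled column contributes at most two more.
-/


open Finset

/-- The Hamiltonian of the Ising model on the discrete torus
`Λ = (ℤ/Kℤ) × (ℤ/Lℤ)` without external field: the number of unordered pairs of
adjacent sites (adjacency being a difference of `±1` in exactly one coordinate,
with periodic boundary conditions) at which the spins disagree.  Each unordered
edge is counted exactly once, as `{x, x + (1,0)}` or `{x, x + (0,1)}`. -/
def ham (K L : ℕ) [NeZero K] [NeZero L] (σ : ZMod K × ZMod L → ℤ) : ℕ :=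
  ∑ x : ZMod K × ZMod L,
    ((if σ x ≠ σ (x.1 + 1, x.2) then 1 else 0) +
      (if σ x ≠ σ (x.1, x.2 + 1) then 1 else 0))

/-- A spin configuration: a function `Λ → ℤ` taking values in `{-1, +1}`. -/
def IsIsingConfig {K L : ℕ} (σ : ZMod K × ZMod L → ℤ) : Prop :=
  ∀ x, σ x = 1 ∨ σ x = -1

/-! ### Disagreements along a cycle -/

/-- A nonconstant function on a cycle changes value along at least two edges: if the only change
were across the edge `{i₀, i₀ + 1}`, going round the cycle from `i₀ + 1` would return to `i₀`
without any change. -/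
lemma two_le_cycle {N : ℕ} [NeZero N] (f : ZMod N → ℤ) (hf : ¬ ∀ i j, f i = f j) :
    2 ≤ ∑ i : ZMod N, (if f i ≠ f (i + 1) then 1 else 0) := by
  by_contra hlt
  apply hf
  rw [← Finset.card_filter] at hlt
  obtain ⟨i₀, hi₀⟩ := Finset.card_le_one_iff_subset_singleton.1
    (show (univ.filter fun i : ZMod N => f i ≠ f (i + 1)).card ≤ 1 by omega)
  have step : ∀ i, i ≠ i₀ → f i = f (i + 1) := by
    intro i hi
    by_contra h
    exact hi (by simpa using hi₀ (Finset.mem_filter.2 ⟨Finset.mem_univ i, h⟩))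
  have walk : ∀ k : ℕ, k < N → f (i₀ + 1 + k) = f (i₀ + 1) := by
    intro k
    induction k with
    | zero => simp
    | succ k ih =>
      intro hk
      have hne : i₀ + 1 + (k : ZMod N) ≠ i₀ := by
        intro h
        have h0 : ((k + 1 : ℕ) : ZMod N) = 0 := by
          push_cast
          linear_combination h
        rw [ZMod.natCast_eq_zero_iff] at h0
        exact absurd (Nat.le_of_dvd (by omega) h0) (by omega)
      rw [← ih (by omega), step _ hne]
      push_cast
      ring_nf
  have hall : ∀ i, f i = f (i₀ + 1) := by
    intro i
    rw [← walk (i - (i₀ + 1)).val (ZMod.val_lt _), ZMod.natCast_rightInverse]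
    ring_nf
  intro i j
  rw [hall i, hall j]

/-- For the spin pattern of an initial segment, the only possible changes are at the end of the
segment and across the edge
`{-1, 0}`. -/
lemma cycle_initial_le_two {N : ℕ} [NeZero N] (f : ZMod N → ℤ) (m : ℕ)
    (hf : ∀ i, f i = if i.val < m then 1 else -1) :
    ∑ i : ZMod N, (if f i ≠ f (i + 1) then 1 else 0) ≤ 2 := by
  rw [← Finset.card_filter]
  refine (Finset.card_le_card (t := {((m - 1 : ℕ) : ZMod N), ((N - 1 : ℕ) : ZMod N)}) ?_).trans
    Finset.card_le_two
  intro i hi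
  have hne := (Finset.mem_filter.1 hi).2
  rw [hf, hf] at hne
  have hiN := ZMod.val_lt i
  have hval : i.val = m - 1 ∨ i.val = N - 1 := by
    by_contra h
    push Not at h
    have hs : (i + 1).val = i.val + 1 := by
      rw [← ZMod.val_cast_of_lt (show i.val + 1 < N by omega), Nat.cast_add, Nat.cast_one,
        ZMod.natCast_rightInverse]
    rw [hs] at hne
    split_ifs at hne <;> omega
  simp only [Finset.mem_insert, Finset.mem_singleton]
  rcases hval with h | h
  · left; rw [← h, ZMod.natCast_rightInverse]
  · right; rw [← h, ZMod.natCast_rightInverse]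

lemma ham_eq (K L : ℕ) [NeZero K] [NeZero L] (σ : ZMod K × ZMod L → ℤ) :
    ham K L σ = (∑ i, ∑ j, (if σ (i, j) ≠ σ (i, j + 1) then 1 else 0)) +
      ∑ j, ∑ i, (if σ (i, j) ≠ σ (i + 1, j) then 1 else 0) := by
  unfold ham
  rw [Finset.sum_add_distrib, Fintype.sum_prod_type_right, Fintype.sum_prod_type, add_comm]

/-! ### Structure of configurations below the barrier -/

lemma dvd_plus_of_columns_constant {K L : ℕ} [NeZero K] [NeZero L] (σ : ZMod K × ZMod L → ℤ)
    (h : ∀ j i i', σ (i, j) = σ (i', j)) : K ∣ (univ.filter fun x => σ x = 1).card := by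
  rw [Finset.card_filter, Fintype.sum_prod_type_right]
  refine Finset.dvd_sum fun j _ => ?_
  rw [Finset.sum_congr rfl (fun i _ => by rw [h j i 0]), Finset.sum_const, Finset.card_univ,
    ZMod.card, smul_eq_mul]
  exact dvd_mul_right _ _

lemma dvd_plus_of_rows_constant {K L : ℕ} [NeZero K] [NeZero L] (σ : ZMod K × ZMod L → ℤ)
    (h : ∀ i j j', σ (i, j) = σ (i, j')) : L ∣ (univ.filter fun x => σ x = 1).card := by
  rw [Finset.card_filter, Fintype.sum_prod_type]
  refine Finset.dvd_sum fun i _ => ?_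
  rw [Finset.sum_congr rfl (fun j _ => by rw [h i j 0]), Finset.sum_const, Finset.card_univ,
    ZMod.card, smul_eq_mul]
  exact dvd_mul_right _ _

/-- Below energy `2K + 2`, either the plus set is a union of full parallel lines, or one of the two
phases fits into a box of half-perimeter at most `K`. -/
lemma low_energy_structure {K L : ℕ} [NeZero K] [NeZero L] (hKL : K ≤ L)
    (σ : ZMod K × ZMod L → ℤ) (hσ : ham K L σ < 2 * K + 2) :
    K ∣ (univ.filter fun x => σ x = 1).card ∨
      4 * (univ.filter fun x => σ x = 1).card ≤ K ^ 2 ∨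
      4 * (univ.filter fun x => ¬ σ x = 1).card ≤ K ^ 2 := by
  classical
  -- the mixed rows and the mixed columns
  set A : Finset (ZMod K) := univ.filter fun i => ¬ ∀ j j', σ (i, j) = σ (i, j') with hA
  set B : Finset (ZMod L) := univ.filter fun j => ¬ ∀ i i', σ (i, j) = σ (i', j) with hB
  have hrow : 2 * A.card ≤ ∑ i, ∑ j, (if σ (i, j) ≠ σ (i, j + 1) then 1 else 0) := by
    rw [hA, Finset.card_filter, Finset.mul_sum]
    refine Finset.sum_le_sum fun i _ => ?_
    split_ifs with h
    · simp
    · simpa using two_le_cycle (fun j => σ (i, j)) h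
  have hcol : 2 * B.card ≤ ∑ j, ∑ i, (if σ (i, j) ≠ σ (i + 1, j) then 1 else 0) := by
    rw [hB, Finset.card_filter, Finset.mul_sum]
    refine Finset.sum_le_sum fun j _ => ?_
    split_ifs with h
    · simp
    · simpa using two_le_cycle (fun i => σ (i, j)) h
  rw [ham_eq] at hσ
  have hab : A.card + B.card ≤ K := by omega
  have hbox : 4 * (A.card * B.card) ≤ K ^ 2 := by
    have h1 : 4 * (A.card * B.card) ≤ (A.card + B.card) ^ 2 := by
      have := four_mul_le_pow_two_add A.card B.card
      linarith
    exact h1.trans (Nat.pow_le_pow_left hab 2)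
  have hmemA : ∀ i, i ∉ A → ∀ j j', σ (i, j) = σ (i, j') := by
    intro i hi
    by_contra h
    exact hi (Finset.mem_filter.2 ⟨Finset.mem_univ i, h⟩)
  have hmemB : ∀ j, j ∉ B → ∀ i i', σ (i, j) = σ (i', j) := by
    intro j hj
    by_contra h
    exact hj (Finset.mem_filter.2 ⟨Finset.mem_univ j, h⟩)
  by_cases hAu : A = univ
  · left
    have hAc : A.card = K := by rw [hAu, Finset.card_univ, ZMod.card]
    have hB0 : B = ∅ := Finset.card_eq_zero.1 (by omega)
    exact dvd_plus_of_columns_constant σ fun j => hmemB j (by simp [hB0])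
  by_cases hBu : B = univ
  · left
    have hBc : B.card = L := by rw [hBu, Finset.card_univ, ZMod.card]
    have hA0 : A = ∅ := Finset.card_eq_zero.1 (by omega)
    have hKL' : K = L := by omega
    exact hKL'.dvd.trans (dvd_plus_of_rows_constant σ fun i => hmemA i (by simp [hA0]))
  right
  obtain ⟨i₀, hi₀⟩ : ∃ i, i ∉ A := by
    by_contra! h
    exact hAu (Finset.eq_univ_of_forall h)
  obtain ⟨j₀, hj₀⟩ : ∃ j, j ∉ B := by
    by_contra! h
    exact hBu (Finset.eq_univ_of_forall h)
  -- a site on a constant line carries the spin of the crossing point `(i₀, j₀)`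
  have hout : ∀ x : ZMod K × ZMod L, x ∉ A ×ˢ B → σ x = σ (i₀, j₀) := by
    rintro ⟨i, j⟩ hx
    rw [Finset.mem_product, not_and_or] at hx
    rcases hx with hi | hj
    · rw [hmemA i hi j j₀, hmemB j₀ hj₀ i i₀]
    · rw [hmemB j hj i i₀, hmemA i₀ hi₀ j j₀]
  by_cases hc : σ (i₀, j₀) = 1
  · right
    have : (univ.filter fun x => ¬ σ x = 1) ⊆ A ×ˢ B := by
      intro x hx
      by_contra h
      exact (Finset.mem_filter.1 hx).2 ((hout x h).trans hc)
    have := Finset.card_le_card this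
    rw [Finset.card_product] at this
    omega
  · left
    have : (univ.filter fun x => σ x = 1) ⊆ A ×ˢ B := by
      intro x hx
      by_contra h
      exact hc ((hout x h).symm.trans (Finset.mem_filter.1 hx).2)
    have := Finset.card_le_card this
    rw [Finset.card_product] at this
    omega

/-- Having exactly `K * (K / 2) + 1` plus sites is excluded by each alternative of
`low_energy_structure`. -/
lemma barrier_of_card {K L : ℕ} [NeZero K] [NeZero L] (hK : 5 ≤ K) (hKL : K ≤ L)
    (σ : ZMod K × ZMod L → ℤ)
    (hc : (univ.filter fun x => σ x = 1).card = K * (K / 2) + 1) : 2 * K + 2 ≤ ham K L σ := by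
  by_contra! hlt
  have hsum : (univ.filter fun x => σ x = 1).card + (univ.filter fun x => ¬ σ x = 1).card
      = K * L := by
    rw [Finset.card_filter_add_card_filter_not, Finset.card_univ, Fintype.card_prod, ZMod.card,
      ZMod.card]
  have hKK : K * K ≤ K * L := Nat.mul_le_mul_left K hKL
  have h1 : K * K ≤ 2 * (K * (K / 2)) + K := by
    have : K * K ≤ K * (2 * (K / 2) + 1) := Nat.mul_le_mul_left K (by omega)
    linarith
  have h2 : 2 * (K * (K / 2)) ≤ K * K := by
    have : K * (2 * (K / 2)) ≤ K * K := Nat.mul_le_mul_left K (by omega)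
    linarith
  rcases low_energy_structure hKL σ hlt with h | h | h
  · rw [hc, Nat.dvd_add_right (dvd_mul_right _ _), Nat.dvd_one] at h
    omega
  · rw [hc] at h
    nlinarith
  · nlinarith

lemma card_plus_succ_le {K L : ℕ} [NeZero K] [NeZero L] (σ τ : ZMod K × ZMod L → ℤ)
    (h : ∃! x, σ x ≠ τ x) :
    (univ.filter fun x => τ x = 1).card ≤ (univ.filter fun x => σ x = 1).card + 1 := by
  classical
  obtain ⟨x, -, hx⟩ := h
  refine (Finset.card_le_card (t := insert x (univ.filter fun x => σ x = 1)) ?_).trans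
    (Finset.card_insert_le _ _)
  intro y hy
  have hy1 := (Finset.mem_filter.1 hy).2
  by_cases hyx : σ y = τ y
  · exact Finset.mem_insert_of_mem (Finset.mem_filter.2 ⟨Finset.mem_univ y, hyx.trans hy1⟩)
  · exact Finset.mem_insert.2 (Or.inl (hx y hyx))

/-- A sequence starting at `0` with increments at most one attains every value up to its
final one. -/
lemma exists_eq_of_step_le {T n : ℕ} (c : ℕ → ℕ) (h0 : c 0 = 0)
    (hs : ∀ t < T, c (t + 1) ≤ c t + 1) (hn : n ≤ c T) : ∃ t ≤ T, c t = n := by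
  induction T with
  | zero => exact ⟨0, le_rfl, by omega⟩
  | succ T ih =>
    by_cases h : n ≤ c T
    · obtain ⟨t, ht, hc⟩ := ih (fun t ht => hs t (by omega)) h
      exact ⟨t, by omega, hc⟩
    · exact ⟨T + 1, le_rfl, by have := hs T (by omega); omega⟩

/-! ### The reference path -/

/-- The configuration whose plus sites are the first `t` sites in the order that lists the columns
`ℤ/K × {j}` one after another. -/
def fillPath (K L : ℕ) (t : ℕ) (x : ZMod K × ZMod L) : ℤ :=
  if x.1.val + K * x.2.val < t then 1 else -1

lemma fillPath_step {K L : ℕ} [NeZero K] [NeZero L] (t : ℕ) (ht : t < K * L) :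
    ∃! x, fillPath K L t x ≠ fillPath K L (t + 1) x := by
  have hKpos : 0 < K := NeZero.pos K
  have key : ∀ x : ZMod K × ZMod L,
      fillPath K L t x ≠ fillPath K L (t + 1) x ↔ x.1.val + K * x.2.val = t := by
    intro x
    unfold fillPath
    split_ifs <;> simp <;> omega
  have hdiv : t / K < L := Nat.div_lt_of_lt_mul ht
  refine ⟨(((t % K : ℕ) : ZMod K), ((t / K : ℕ) : ZMod L)), ?_, ?_⟩
  · simp only [key]
    rw [ZMod.val_cast_of_lt (Nat.mod_lt _ hKpos), ZMod.val_cast_of_lt hdiv, Nat.mod_add_div]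
  · rintro ⟨i, j⟩ hx
    rw [key] at hx
    have hi := ZMod.val_lt i
    simp only at hx
    have h1 : t % K = i.val := by
      rw [← hx, Nat.add_mul_mod_self_left, Nat.mod_eq_of_lt hi]
    have h2 : t / K = j.val := by
      rw [← hx, Nat.add_mul_div_left _ _ hKpos, Nat.div_eq_of_lt hi, zero_add]
    rw [h1, h2, ZMod.natCast_rightInverse, ZMod.natCast_rightInverse]

lemma ham_fillPath_le (K L : ℕ) [NeZero K] [NeZero L] (t : ℕ) :
    ham K L (fillPath K L t) ≤ 2 * K + 2 := by
  have hKpos : 0 < K := NeZero.pos K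
  rw [ham_eq]
  apply Nat.add_le_add
  · have hrow : ∀ i ∈ (univ : Finset (ZMod K)), ∑ j : ZMod L,
        (if fillPath K L t (i, j) ≠ fillPath K L t (i, j + 1) then 1 else 0) ≤ 2 := by
      intro i _
      -- `i + K j < t` means `j < ⌈(t - i) / K⌉`
      refine cycle_initial_le_two (fun j => fillPath K L t (i, j))
        ((t + (K - 1) - i.val) / K) fun j => ?_
      have hi := ZMod.val_lt i
      have : i.val + K * j.val < t ↔ j.val < (t + (K - 1) - i.val) / K := by
        rw [← Nat.succ_le_iff (m := j.val), Nat.le_div_iff_mul_le hKpos, Nat.succ_mul,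
          Nat.mul_comm j.val K]
        omega
      simp only [fillPath, this]
    refine (Finset.sum_le_card_nsmul _ _ 2 hrow).trans ?_
    rw [Finset.card_univ, ZMod.card, smul_eq_mul, mul_comm]
  · have hcol : ∀ j ∈ (univ : Finset (ZMod L)), ∑ i : ZMod K,
        (if fillPath K L t (i, j) ≠ fillPath K L t (i + 1, j) then 1 else 0)
          ≤ if j = ((t / K : ℕ) : ZMod L) then 2 else 0 := by
      intro j _
      split_ifs with hj
      · refine cycle_initial_le_two (fun i => fillPath K L t (i, j)) (t - K * j.val) fun i => ?_
        have : i.val + K * j.val < t ↔ i.val < t - K * j.val := by omega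
        simp only [fillPath, this]
      · -- every column other than number `t / K` is completely full or completely empty
        have hne : j.val ≠ t / K := by
          intro h
          exact hj (by rw [← h, ZMod.natCast_rightInverse])
        have hconst : ∀ i : ZMod K, i.val + K * j.val < t ↔ j.val < t / K := by
          intro i
          have hi := ZMod.val_lt i
          have hdm := Nat.div_add_mod t K
          have hm := Nat.mod_lt t hKpos
          rcases lt_or_gt_of_ne hne with h | h
          · have : K * (j.val + 1) ≤ K * (t / K) := Nat.mul_le_mul_left K h
            rw [Nat.mul_succ] at this
            omega
          · have : K * (t / K + 1) ≤ K * j.val := Nat.mul_le_mul_left K h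
            rw [Nat.mul_succ] at this
            omega
        simp [fillPath, hconst]
    refine (Finset.sum_le_sum hcol).trans ?_
    simp


/-- **Energy barrier for the two-dimensional Ising model without external
field** (Neves–Schonmann / Nardi–Zucca): for `5 ≤ K ≤ L`,
(i) there is a path of single-site spin flips from `⊟` (all `-1`) to `⊞`
(all `+1`) along which the Hamiltonian never exceeds `Γ = 2K + 2`, and
(ii) every such path from `⊟` to `⊞` contains a configuration of energy at
least `2K + 2`.  Hence the communication height `Φ(⊟,⊞)` equals `2K + 2`. -/
theorem ising_energy_barrier (K L : ℕ) [NeZero K] [NeZero L]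
    (hK : 5 ≤ K) (hKL : K ≤ L) :
    (∃ (T : ℕ) (ω : ℕ → (ZMod K × ZMod L → ℤ)),
      ω 0 = (fun _ => -1) ∧ ω T = (fun _ => 1) ∧
      (∀ t ≤ T, IsIsingConfig (ω t)) ∧
      (∀ t < T, ∃! x : ZMod K × ZMod L, ω t x ≠ ω (t + 1) x) ∧
      ∀ t ≤ T, ham K L (ω t) ≤ 2 * K + 2) ∧
    ∀ (T : ℕ) (ω : ℕ → (ZMod K × ZMod L → ℤ)),
      ω 0 = (fun _ => -1) → ω T = (fun _ => 1) →
      (∀ t ≤ T, IsIsingConfig (ω t)) →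
      (∀ t < T, ∃! x : ZMod K × ZMod L, ω t x ≠ ω (t + 1) x) →
      ∃ t ≤ T, 2 * K + 2 ≤ ham K L (ω t) := by
  constructor
  · refine ⟨K * L, fillPath K L, ?_, ?_, ?_, fun t ht => fillPath_step t ht,
      fun t _ => ham_fillPath_le K L t⟩
    · funext x
      simp [fillPath]
    · funext x
      have h1 := ZMod.val_lt x.1
      have h2 : K * (x.2.val + 1) ≤ K * L := Nat.mul_le_mul_left K (ZMod.val_lt x.2)
      rw [Nat.mul_succ] at h2
      exact if_pos (by omega)
    · intro t _ x
      unfold fillPath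
      split_ifs <;> simp
  · intro T ω h0 hT _ hstep
    obtain ⟨t, ht, hc⟩ := exists_eq_of_step_le (T := T) (n := K * (K / 2) + 1)
      (fun t => (univ.filter fun x => ω t x = 1).card) (by simp [h0])
      (fun t ht => card_plus_succ_le _ _ (hstep t ht)) (by
        simp only [hT, Finset.filter_true, Finset.card_univ, Fintype.card_prod, ZMod.card]
        have h1 : K * (K / 2 + 1) ≤ K * L := Nat.mul_le_mul_left K (by omega)
        rw [Nat.mul_succ] at h1
        omega)
    exact ⟨t, ht, barrier_of_card hK hKL (ω t) hc⟩
end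

section
/- Every optimal transition path crosses the saddle set: assume 5 ≤ K < L. There is no path ω₀ = ⊟, ω₁, …, ω_T = ⊞ such that H(ω_t) ≤ 2K + 2 for all t and ω_t ∉ B_Γ for all t; equivalently, every path from ⊟ to ⊞ along which H stays at most 2K + 2 must contain a configuration belonging to B_Γ. -/
/-!
The number of plus spins changes by one at every step, so a path from `⊟` to `⊞` visits a
configuration with exactly `N = K * (K / 2) + 1` plus spins (`exists_visit`).  Any configuration
`σ` with this volume and `H(σ) ≤ 2K + 2` already lies in the saddle set (`mem_saddleSet`).

Indeed `H` is the sum over all rows and columns of the number of spin changes around that cycle,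
and a non-constant cycle has at least two changes (`two_le_changes`).

* If some row and some column are constant, they carry a common spin `s`, and the sites with spin
  different from `s` lie in the product of the `b` non-constant columns and the `a` non-constant
  rows, with `a + b ≤ K + 1`.  So there are at most `(K + 1)² / 4` of them, which is less than both
  `N` and `K L - N`.
* If no row is constant, then `2L ≤ 2K + 2`, so `L = K + 1` and every column is constant; but
  `N` is not a multiple of `K + 1`.
* If no column is constant, the columns account for `2K` changes, so at most one row is
  non-constant.  Since `N ≡ 1` mod `K`, there is exactly one, it contains a single plus spin, and
  `K / 2` of the other rows are plus.  Each column then has exactly two changes, so its plus spins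
  form an arc (`exists_arc`); comparing the column through the extra plus spin with any other
  column shows that this spin sits next to the strip.
-/

open Finset

/-- The canonical configuration `ζ^{up}_{ℓ,v;k,h}`: spins are `+1` exactly on
`((ℤ/Kℤ) × {ℓ, …, ℓ+v-1}) ∪ ({k, …, k+h-1} × {ℓ+v})` and `-1` elsewhere. -/
def zetaUp (K L : ℕ) (ℓ : ZMod L) (v : ℕ) (k : ZMod K) (h : ℕ) :
    ZMod K × ZMod L → ℤ :=
  fun x => if (∃ n < v, x.2 = ℓ + (n : ZMod L)) ∨
      ((∃ m < h, x.1 = k + (m : ZMod K)) ∧ x.2 = ℓ + (v : ZMod L)) then 1 else -1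

/-- The canonical configuration `ζ^{down}_{ℓ,v;k,h}`: spins are `+1` exactly on
`((ℤ/Kℤ) × {ℓ, …, ℓ+v-1}) ∪ ({k, …, k+h-1} × {ℓ-1})` and `-1` elsewhere. -/
def zetaDown (K L : ℕ) (ℓ : ZMod L) (v : ℕ) (k : ZMod K) (h : ℕ) :
    ZMod K × ZMod L → ℤ :=
  fun x => if (∃ n < v, x.2 = ℓ + (n : ZMod L)) ∨
      ((∃ m < h, x.1 = k + (m : ZMod K)) ∧ x.2 = ℓ - 1) then 1 else -1

/-- The saddle set
`B_Γ = {ζ^{up}_{ℓ,v;k,h}, ζ^{down}_{ℓ,v;k,h} : 2 ≤ v ≤ L-3, 1 ≤ h ≤ K-1}`. -/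
def saddleSet (K L : ℕ) : Set (ZMod K × ZMod L → ℤ) :=
  {σ | ∃ (ℓ : ZMod L) (k : ZMod K) (v h : ℕ),
    2 ≤ v ∧ v ≤ L - 3 ∧ 1 ≤ h ∧ h ≤ K - 1 ∧
    (σ = zetaUp K L ℓ v k h ∨ σ = zetaDown K L ℓ v k h)}

/-! ### Spin changes around a cycle -/

/-- The number of positions of the cycle `ℤ/nℤ` at which `f` differs from its successor. -/
def changes {n : ℕ} [NeZero n] (f : ZMod n → ℤ) : ℕ :=
  #{i : ZMod n | f i ≠ f (i + 1)}

/-- `f` is constant on the cycle. -/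
def IsMono {n : ℕ} (f : ZMod n → ℤ) : Prop := ∀ i j, f i = f j

lemma exists_offset {n : ℕ} [NeZero n] (a z : ZMod n) : ∃ i < n, z = a + (i : ZMod n) :=
  ⟨(z - a).val, ZMod.val_lt _, by simp⟩

lemma natCast_inj_of_lt {n : ℕ} {i j : ℕ} (hi : i < n) (hj : j < n)
    (h : (i : ZMod n) = (j : ZMod n)) : i = j := by
  have := (ZMod.natCast_eq_natCast_iff' i j n).1 h
  rwa [Nat.mod_eq_of_lt hi, Nat.mod_eq_of_lt hj] at this

/-- A function on a cycle whose only possible change is at `a` is constant: walk around the cycle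
from `a + 1` back to `a`. -/
lemma isMono_of_changes_at {n : ℕ} [NeZero n] (f : ZMod n → ℤ) (a : ZMod n)
    (h : ∀ i, f i ≠ f (i + 1) → i = a) : IsMono f := by
  have key : ∀ i : ℕ, i < n → f (a + 1 + (i : ZMod n)) = f (a + 1) := by
    intro i
    induction i with
    | zero => intro _; simp
    | succ i ih =>
      intro hi
      rw [← ih (by omega)]
      by_contra hne
      have h1 : a + 1 + (i : ZMod n) = a := by
        apply h
        intro h2
        apply hne
        rw [h2]
        push_cast
        ring_nf
      have h2 : ((i + 1 : ℕ) : ZMod n) = ((0 : ℕ) : ZMod n) := by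
        push_cast
        linear_combination h1
      have := natCast_inj_of_lt hi (by omega) h2
      omega
  intro x y
  obtain ⟨i, hi, rfl⟩ := exists_offset (a + 1) x
  obtain ⟨j, hj, rfl⟩ := exists_offset (a + 1) y
  rw [key i hi, key j hj]

lemma two_le_changes {n : ℕ} [NeZero n] (f : ZMod n → ℤ) (h : ¬ IsMono f) :
    2 ≤ changes f := by
  by_contra hlt
  have hle : #{i : ZMod n | f i ≠ f (i + 1)} ≤ 1 := by
    unfold changes at hlt; omega
  obtain ⟨a, ha⟩ := Finset.card_le_one_iff_subset_singleton.1 hle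
  apply h
  apply isMono_of_changes_at f a
  intro i hi
  have := ha (show i ∈ _ by simpa using hi)
  simpa using this

/-- If a function has at most two changes, two distinct changes are all of them. -/
lemma eq_or_eq_of_changes {n : ℕ} [NeZero n] (f : ZMod n → ℤ) (h : changes f ≤ 2)
    {a b z : ZMod n} (hab : a ≠ b) (ha : f a ≠ f (a + 1)) (hb : f b ≠ f (b + 1))
    (hz : f z ≠ f (z + 1)) : z = a ∨ z = b := by
  by_contra hcon
  push Not at hcon
  have hsub : ({a, b, z} : Finset (ZMod n)) ⊆ ({i : ZMod n | f i ≠ f (i + 1)} : Finset _) := by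
    intro i hi
    simp only [Finset.mem_insert, Finset.mem_singleton] at hi
    rcases hi with rfl | rfl | rfl <;> simpa
  have h3 := Finset.card_le_card hsub
  rw [Finset.card_eq_three.2 ⟨a, b, z, hab, hcon.1.symm, hcon.2.symm, rfl⟩] at h3
  unfold changes at h
  omega

/-- The plus spins of a non-constant configuration with at most two changes on a cycle form an
arc, preceded by a minus spin. -/
lemma exists_arc {n : ℕ} [NeZero n] (f : ZMod n → ℤ) (hf : ∀ i, f i = 1 ∨ f i = -1)
    (hm : ¬ IsMono f) (hc : changes f ≤ 2) :
    ∃ (l : ZMod n) (c : ℕ), c < n ∧ f (l - 1) = -1 ∧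
      ∀ z, f z = 1 ↔ ∃ i < c, z = l + (i : ZMod n) := by
  classical
  have hup : ∃ a, f a = -1 ∧ f (a + 1) = 1 := by
    by_contra hno
    push Not at hno
    have hminus : ∃ b, f b = -1 := by
      by_contra hb
      push Not at hb
      have hall : ∀ i, f i = 1 := fun i => (hf i).resolve_right (hb i)
      exact hm fun i j => by rw [hall i, hall j]
    obtain ⟨b, hb⟩ := hminus
    have hall : ∀ i : ℕ, f (b + (i : ZMod n)) = -1 := by
      intro i
      induction i with
      | zero => simpa using hb
      | succ i ih =>
        have := (hf (b + (i : ZMod n) + 1)).resolve_left (hno _ ih)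
        rw [← this]
        push_cast
        ring_nf
    apply hm
    intro x y
    obtain ⟨i, -, rfl⟩ := exists_offset b x
    obtain ⟨j, -, rfl⟩ := exists_offset b y
    rw [hall, hall]
  obtain ⟨a, ha, ha1⟩ := hup
  have hex : ∃ i : ℕ, f (a + 1 + (i : ZMod n)) = -1 := by
    obtain ⟨i, -, hi⟩ := exists_offset (a + 1) a
    exact ⟨i, by rw [← hi, ha]⟩
  have hspec := Nat.find_spec hex
  have hmin : ∀ i, i < Nat.find hex → f (a + 1 + (i : ZMod n)) = 1 :=
    fun i hi => (hf _).resolve_right (Nat.find_min hex hi)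
  have hlt : Nat.find hex < n := by
    obtain ⟨i, hin, hi⟩ := exists_offset (a + 1) a
    exact lt_of_le_of_lt (Nat.find_min' hex (by rw [← hi, ha])) hin
  generalize Nat.find hex = c at hspec hmin hlt
  have hc0 : c ≠ 0 := by
    rintro rfl
    simp [ha1] at hspec
  obtain ⟨d, rfl⟩ := Nat.exists_eq_succ_of_ne_zero hc0
  have hd := hmin d (by omega)
  have hd1 : f (a + 1 + (d : ZMod n) + 1) = -1 := by
    rw [← hspec]; push_cast; ring_nf
  -- The rise at `a` and the drop after the arc are the only changes.
  have honly : ∀ z, f z = -1 → f (z + 1) = 1 → z = a := by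
    intro z hz hz1
    have hne : a ≠ a + 1 + (d : ZMod n) := by
      intro h
      rw [← h, ha] at hd
      norm_num at hd
    rcases eq_or_eq_of_changes f hc hne (by rw [ha, ha1]; norm_num)
      (by rw [hd, hd1]; norm_num) (z := z) (by rw [hz, hz1]; norm_num) with h | h
    · exact h
    · rw [← h, hz] at hd
      norm_num at hd
  have hoff : ∀ m : ℕ, d + 1 + m < n → f (a + 1 + ((d + 1 + m : ℕ) : ZMod n)) = -1 := by
    intro m
    induction m with
    | zero => intro _; simpa using hspec
    | succ m ih =>
      intro hm'
      refine (hf _).resolve_left fun h1 => ?_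
      have hz := honly _ (ih (by omega)) (by rw [← h1]; push_cast; ring_nf)
      have h2 : ((d + 1 + (m + 1) : ℕ) : ZMod n) = ((0 : ℕ) : ZMod n) := by
        push_cast at hz ⊢
        linear_combination hz
      have := natCast_inj_of_lt hm' (by omega) h2
      omega
  refine ⟨a + 1, d + 1, hlt, by simpa using ha, fun z => ⟨fun hz => ?_, ?_⟩⟩
  · obtain ⟨i, hi, rfl⟩ := exists_offset (a + 1) z
    refine ⟨i, ?_, rfl⟩
    by_contra hge
    have := hoff (i - (d + 1)) (by omega)
    rw [Nat.add_sub_cancel' (by omega), hz] at this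
    norm_num at this
  · rintro ⟨i, hi, rfl⟩
    exact hmin i hi

/-- If both `f` and the function obtained from it by adding one plus spin at `y` have at most two
changes, then `y` is adjacent to the arc of plus spins of `f`. -/
lemma adjacent_of_changes {n : ℕ} [NeZero n] (f g : ZMod n → ℤ) (l y : ZMod n) (c : ℕ)
    (hn : 2 ≤ n) (hc0 : 0 < c)
    (hl : f (l - 1) = -1)
    (harc : ∀ z, f z = 1 ↔ ∃ i < c, z = l + (i : ZMod n))
    (hy : f y = -1) (hgy : g y = 1) (hg : ∀ z, z ≠ y → g z = f z) (hgc : changes g ≤ 2) :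
    y = l + (c : ZMod n) ∨ y = l - 1 := by
  have hone : (1 : ZMod n) ≠ 0 := by
    have : Fact (1 < n) := ⟨by omega⟩
    exact one_ne_zero
  have hny : f y ≠ 1 := by rw [hy]; norm_num
  have hfl : f l = 1 := (harc l).2 ⟨0, hc0, by simp⟩
  by_cases h1 : f (y - 1) = 1
  · left
    obtain ⟨i, hi, hyi⟩ := (harc _).1 h1
    by_cases hic : i + 1 < c
    · exact absurd ((harc y).2 ⟨i + 1, hic, by push_cast; linear_combination hyi⟩) hny
    · have : c = i + 1 := by omega
      rw [this]; push_cast; linear_combination hyi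
  right
  by_cases h2 : f (y + 1) = 1
  · obtain ⟨i, hi, hyi⟩ := (harc _).1 h2
    rcases i with _ | i
    · linear_combination hyi + (Nat.cast_zero : ((0 : ℕ) : ZMod n) = 0)
    · exact absurd ((harc y).2 ⟨i, by omega, by push_cast at hyi; linear_combination hyi⟩) hny
  -- Otherwise `g` already changes on both sides of `y`, and must change next to `l` as well.
  by_contra hne
  have e1 : y - 1 ≠ y := fun h => hone (by linear_combination -h)
  have e2 : y + 1 ≠ y := fun h => hone (by linear_combination h)
  have hly : l ≠ y := fun h => hny (h ▸ hfl)
  have hl1 : l - 1 ≠ y := fun h => hne h.symm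
  rcases eq_or_eq_of_changes g hgc (a := y - 1) (b := y) (z := l - 1) e1
    (by rw [sub_add_cancel, hgy, hg _ e1]; exact h1)
    (by rw [hgy, hg _ e2]; exact fun h => h2 h.symm)
    (by rw [sub_add_cancel, hg _ hl1, hg _ hly, hl, hfl]; norm_num) with h | h
  · exact hly (by linear_combination h)
  · exact hl1 h

/-! ### The Hamiltonian by rows and columns -/

section Torus

variable {K L : ℕ} [NeZero K] [NeZero L]

/-- The number of plus spins. -/
def volume (σ : ZMod K × ZMod L → ℤ) : ℕ := #{x : ZMod K × ZMod L | σ x = 1}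

lemma ham_eq_s17 (σ : ZMod K × ZMod L → ℤ) :
    ham K L σ = (∑ y, changes (fun x => σ (x, y))) + ∑ x, changes (fun y => σ (x, y)) := by
  unfold ham changes
  rw [Finset.sum_add_distrib, Fintype.sum_prod_type, Fintype.sum_prod_type, Finset.sum_comm]
  simp only [Finset.card_filter]

lemma volume_eq_sum_rows (σ : ZMod K × ZMod L → ℤ) :
    volume σ = ∑ y, #{x : ZMod K | σ (x, y) = 1} := by
  unfold volume
  simp only [Finset.card_filter]
  rw [Fintype.sum_prod_type, Finset.sum_comm]

lemma volume_eq_sum_cols (σ : ZMod K × ZMod L → ℤ) :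
    volume σ = ∑ x, #{y : ZMod L | σ (x, y) = 1} := by
  unfold volume
  simp only [Finset.card_filter]
  rw [Fintype.sum_prod_type]

lemma card_plus_of_isMono {n : ℕ} [NeZero n] (f : ZMod n → ℤ) (h : IsMono f) :
    #{i : ZMod n | f i = 1} = if f 0 = 1 then n else 0 := by
  split_ifs with h0
  · rw [Finset.filter_true_of_mem fun i _ => (h i 0).trans h0, Finset.card_univ, ZMod.card]
  · rw [Finset.filter_false_of_mem fun i _ hi => h0 ((h 0 i).trans hi), Finset.card_empty]

open Classical in
lemma two_mul_card_le_sum {ι : Type*} [Fintype ι] {n : ℕ} [NeZero n] (F : ι → ZMod n → ℤ) :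
    2 * #{i : ι | ¬ IsMono (F i)} ≤ ∑ i, changes (F i) := by
  calc 2 * #{i : ι | ¬ IsMono (F i)} = ∑ i ∈ {i : ι | ¬ IsMono (F i)}, 2 := by
        rw [Finset.sum_const, smul_eq_mul, mul_comm]
    _ ≤ ∑ i ∈ {i : ι | ¬ IsMono (F i)}, changes (F i) :=
        Finset.sum_le_sum fun i hi => two_le_changes _ (by simpa using hi)
    _ ≤ ∑ i, changes (F i) :=
        Finset.sum_le_sum_of_subset (Finset.subset_univ _)

/-- The isoperimetric case: with a constant row and a constant column, the sites whose spin
differs from the common value fill at most a rectangle of half-perimeter `K + 1`. -/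
lemma card_minority_le (σ : ZMod K × ZMod L → ℤ) (hham : ham K L σ ≤ 2 * K + 2)
    (x₀ : ZMod K) (y₀ : ZMod L) (hx : IsMono (fun y => σ (x₀, y)))
    (hy : IsMono (fun x => σ (x, y₀))) :
    4 * #{z : ZMod K × ZMod L | σ z ≠ σ (x₀, y₀)} ≤ (K + 1) ^ 2 := by
  classical
  have hr := two_mul_card_le_sum (fun (y : ZMod L) (x : ZMod K) => σ (x, y))
  have hc := two_mul_card_le_sum (fun (x : ZMod K) (y : ZMod L) => σ (x, y))
  rw [ham_eq_s17] at hham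
  set X : Finset (ZMod K) := {x | ¬ IsMono fun y => σ (x, y)} with hX
  set Y : Finset (ZMod L) := {y | ¬ IsMono fun x => σ (x, y)} with hY
  have hsub : ({z : ZMod K × ZMod L | σ z ≠ σ (x₀, y₀)} : Finset _) ⊆ X ×ˢ Y := by
    rintro ⟨x, y⟩ hz
    simp only [Finset.mem_filter, Finset.mem_univ, true_and] at hz
    simp only [Finset.mem_product, hX, hY, Finset.mem_filter, Finset.mem_univ, true_and]
    refine ⟨fun h => hz ?_, fun h => hz ?_⟩
    · exact (h y y₀).trans (hy x x₀)
    · exact (h x x₀).trans (hx y y₀)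
  have hcard := Finset.card_le_card hsub
  rw [Finset.card_product] at hcard
  have hsum : #X + #Y ≤ K + 1 := by omega
  have hsq : (#X + #Y) ^ 2 ≤ (K + 1) ^ 2 := Nat.pow_le_pow_left hsum 2
  nlinarith [sq_nonneg ((#X : ℤ) - #Y), four_mul_le_sq_add (#X) (#Y)]

lemma volume_add_card_ne (σ : ZMod K × ZMod L → ℤ) :
    volume σ + #{z : ZMod K × ZMod L | σ z ≠ 1} = K * L := by
  unfold volume
  rw [Finset.card_filter_add_card_filter_not]
  simp [ZMod.card]

/-! ### Configurations of volume `K * (K / 2) + 1` -/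

lemma col_not_isMono (hK : 5 ≤ K) (hKL : K < L) (σ : ZMod K × ZMod L → ℤ)
    (hcfg : IsIsingConfig σ) (hham : ham K L σ ≤ 2 * K + 2)
    (hvol : volume σ = K * (K / 2) + 1) (x₀ : ZMod K) : ¬ IsMono (fun y => σ (x₀, y)) := by
  classical
  intro hx
  obtain ⟨p, hp⟩ : ∃ p, p = K / 2 := ⟨_, rfl⟩
  rw [← hp] at hvol
  by_cases hrow : ∃ y₀, IsMono (fun x => σ (x, y₀))
  · obtain ⟨y₀, hy⟩ := hrow
    have hmin := card_minority_le σ hham x₀ y₀ hx hy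
    have hp1 : 2 * p ≤ K := by omega
    have hp2 : K ≤ 2 * p + 1 := by omega
    rcases hcfg (x₀, y₀) with hs | hs
    · rw [hs] at hmin
      have := volume_add_card_ne σ
      nlinarith
    · have heq : #{z : ZMod K × ZMod L | σ z ≠ σ (x₀, y₀)} = volume σ := by
        unfold volume
        congr 1
        ext z
        simp only [Finset.mem_filter, Finset.mem_univ, true_and, hs]
        rcases hcfg z with h | h <;> simp [h]
      rw [heq, hvol] at hmin
      nlinarith
  · push Not at hrow
    have hr := two_mul_card_le_sum (fun (y : ZMod L) (x : ZMod K) => σ (x, y))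
    have hc := two_mul_card_le_sum (fun (x : ZMod K) (y : ZMod L) => σ (x, y))
    rw [ham_eq_s17] at hham
    have hall : #{y : ZMod L | ¬ IsMono fun x => σ (x, y)} = L := by
      rw [Finset.filter_true_of_mem (fun y _ => hrow y)]
      simp [ZMod.card]
    rw [hall] at hr
    have hL : L = K + 1 := by omega
    have h0 : #{x : ZMod K | ¬ IsMono fun y => σ (x, y)} = 0 := by omega
    rw [Finset.card_eq_zero, Finset.filter_eq_empty_iff] at h0
    have hdvd : L ∣ volume σ := by
      rw [volume_eq_sum_cols]
      refine Finset.dvd_sum fun x _ => ?_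
      rw [card_plus_of_isMono _ (not_not.1 (h0 (Finset.mem_univ x)))]
      split_ifs <;> simp
    rw [hvol, hL] at hdvd
    -- `K p + 1 = (K + 1) p - (p - 1)` with `0 < p - 1 < K + 1`.
    have h2 : K + 1 ∣ p - 1 := by
      have h3 : K * p + 1 + (p - 1) = (K + 1) * p := by
        have : 1 ≤ p := by omega
        zify [this]
        ring
      exact (Nat.dvd_add_right hdvd).1 (h3 ▸ Dvd.intro _ rfl)
    have := Nat.le_of_dvd (by omega) h2
    omega

/-- When no column is constant, every column has at most two changes, and the volume forces `K / 2`
full rows (in no particular position), one row with a single plus spin, and minus rows otherwise. -/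
lemma exists_strip_rows (hK : 5 ≤ K) (σ : ZMod K × ZMod L → ℤ)
    (hcfg : IsIsingConfig σ) (hham : ham K L σ ≤ 2 * K + 2)
    (hvol : volume σ = K * (K / 2) + 1) (hcol : ∀ x, ¬ IsMono (fun y => σ (x, y))) :
    (∀ x, changes (fun y => σ (x, y)) ≤ 2) ∧
    ∃ (k : ZMod K) (y₀ : ZMod L), σ (k, y₀) = 1 ∧ (∀ x, x ≠ k → σ (x, y₀) = -1) ∧
      (∀ y, y ≠ y₀ → IsMono (fun x => σ (x, y))) ∧
      #{y : ZMod L | y ≠ y₀ ∧ σ (0, y) = 1} = K / 2 := by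
  classical
  have hr := two_mul_card_le_sum (fun (y : ZMod L) (x : ZMod K) => σ (x, y))
  have hc := two_mul_card_le_sum (fun (x : ZMod K) (y : ZMod L) => σ (x, y))
  rw [ham_eq_s17] at hham
  have hall : #{x : ZMod K | ¬ IsMono fun y => σ (x, y)} = K := by
    rw [Finset.filter_true_of_mem (fun x _ => hcol x)]
    simp [ZMod.card]
  rw [hall] at hc
  have hex : ∃ y₀, ¬ IsMono (fun x => σ (x, y₀)) := by
    by_contra hno
    push Not at hno
    have hdvd : K ∣ volume σ := by
      rw [volume_eq_sum_rows]
      refine Finset.dvd_sum fun y _ => ?_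
      rw [card_plus_of_isMono _ (hno y)]
      split_ifs <;> simp
    rw [hvol] at hdvd
    have := Nat.le_of_dvd one_pos ((Nat.dvd_add_right (Dvd.intro _ rfl)).1 hdvd)
    omega
  obtain ⟨y₀, hy₀⟩ := hex
  have hcard1 : #{y : ZMod L | ¬ IsMono fun x => σ (x, y)} ≤ 1 := by omega
  have hrows : ∀ y, y ≠ y₀ → IsMono (fun x => σ (x, y)) := by
    intro y hy
    by_contra hm
    exact hy (Finset.card_le_one.1 hcard1 y (by simpa using hm) y₀ (by simpa using hy₀))
  have hpos : 0 < #{y : ZMod L | ¬ IsMono fun x => σ (x, y)} :=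
    Finset.card_pos.2 ⟨y₀, by simpa using hy₀⟩
  have hsumc : ∑ x, changes (fun y => σ (x, y)) ≤ 2 * K := by omega
  have htwo : ∀ x, changes (fun y => σ (x, y)) ≤ 2 := by
    intro x
    by_contra hx
    have hlt : ∑ _x : ZMod K, 2 < ∑ x, changes (fun y => σ (x, y)) :=
      Finset.sum_lt_sum (fun i _ => two_le_changes _ (hcol i)) ⟨x, Finset.mem_univ _, by omega⟩
    simp [ZMod.card] at hlt
    omega
  refine ⟨htwo, ?_⟩
  have hv : volume σ = #{x : ZMod K | σ (x, y₀) = 1} +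
      #{y : ZMod L | y ≠ y₀ ∧ σ (0, y) = 1} * K := by
    rw [volume_eq_sum_rows, ← Finset.add_sum_erase _ _ (Finset.mem_univ y₀)]
    congr 1
    rw [Finset.sum_congr rfl fun y hy =>
      card_plus_of_isMono _ (hrows y (Finset.ne_of_mem_erase hy)),
      ← Finset.sum_filter, Finset.sum_const, smul_eq_mul]
    congr 2
    ext y
    simp
  set r := #{x : ZMod K | σ (x, y₀) = 1} with hrdef
  set q := #{y : ZMod L | y ≠ y₀ ∧ σ (0, y) = 1} with hqdef
  have hrK : r < K := by
    refine lt_of_le_of_ne ((Finset.card_le_univ _).trans (by simp [ZMod.card])) fun h => ?_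
    have h1 : ({x : ZMod K | σ (x, y₀) = 1} : Finset _) = Finset.univ :=
      (Finset.card_eq_iff_eq_univ _).1 (by rw [← hrdef, h, ZMod.card])
    have h2 : ∀ x, σ (x, y₀) = 1 := by simpa using Finset.filter_eq_self.1 h1
    exact hy₀ fun i j => (h2 i).trans (h2 j).symm
  have hr1 : r = 1 := by
    have h1 : volume σ % K = r := by
      rw [hv, Nat.add_mul_mod_self_right, Nat.mod_eq_of_lt hrK]
    rw [hvol, Nat.mul_add_mod, Nat.mod_eq_of_lt (by omega)] at h1
    exact h1.symm
  obtain ⟨k, hk⟩ := Finset.card_eq_one.1 (hrdef ▸ hr1)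
  have hmem : ∀ x, σ (x, y₀) = 1 ↔ x = k := by
    intro x
    have := Finset.ext_iff.1 hk x
    simpa using this
  refine ⟨k, y₀, (hmem k).2 rfl, fun x hx => (hcfg _).resolve_left fun h => hx ((hmem x).1 h),
    hrows, ?_⟩
  have h2 : K * q = K * (K / 2) := by
    rw [hr1, hvol] at hv
    linarith
  exact Nat.eq_of_mul_eq_mul_left (by omega) h2

lemma card_arc {n : ℕ} [NeZero n] (l : ZMod n) (c : ℕ) (hc : c < n) (S : Finset (ZMod n))
    (hS : ∀ z, z ∈ S ↔ ∃ i < c, z = l + (i : ZMod n)) : #S = c := by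
  classical
  have : S = (Finset.range c).image fun i : ℕ => l + (i : ZMod n) := by
    ext z
    rw [hS]
    simp [eq_comm]
  rw [this, Finset.card_image_of_injOn, Finset.card_range]
  intro i hi j hj hij
  simp only [Finset.coe_range, Set.mem_Iio] at hi hj
  exact natCast_inj_of_lt (hi.trans hc) (hj.trans hc) (add_left_cancel hij)

lemma mem_saddleSet (hK : 5 ≤ K) (hKL : K < L) (σ : ZMod K × ZMod L → ℤ)
    (hcfg : IsIsingConfig σ) (hham : ham K L σ ≤ 2 * K + 2)
    (hvol : volume σ = K * (K / 2) + 1) : σ ∈ saddleSet K L := by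
  classical
  have hcol := col_not_isMono hK hKL σ hcfg hham hvol
  obtain ⟨htwo, k, y₀, hk, hrow, hmono, hcard⟩ := exists_strip_rows hK σ hcfg hham hvol hcol
  have hk1 : k + 1 ≠ k := by
    have : Fact (1 < K) := ⟨by omega⟩
    simp
  -- The column next to the extra spin shows exactly the full rows.
  obtain ⟨l, c, hcL, hl, harc⟩ := exists_arc (fun y => σ (k + 1, y)) (fun y => hcfg _)
    (hcol _) (htwo _)
  have hc : c = K / 2 := by
    rw [← hcard]
    refine (card_arc l c hcL _ fun z => ?_).symm
    rw [← harc z]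
    simp only [Finset.mem_filter, Finset.mem_univ, true_and]
    constructor
    · rintro ⟨hz, h0⟩
      exact (hmono z hz (k + 1) 0).trans h0
    · intro h
      have hz : z ≠ y₀ := by
        rintro rfl
        rw [hrow _ hk1] at h
        norm_num at h
      exact ⟨hz, (hmono z hz 0 (k + 1)).trans h⟩
  have hadj := adjacent_of_changes (fun y => σ (k + 1, y)) (fun y => σ (k, y)) l y₀ c
    (by omega) (by omega) hl harc (hrow _ hk1) hk
    (fun z hz => hmono z hz k (k + 1)) (htwo k)
  have hσ : ∀ x y, σ (x, y) = 1 ↔ (∃ n < c, y = l + (n : ZMod L)) ∨ (x = k ∧ y = y₀) := by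
    intro x y
    rw [← harc y]
    by_cases hy : y = y₀
    · subst hy
      by_cases hx : x = k
      · subst hx; simp [hk]
      · simp [hx, hrow x hx, hrow _ hk1]
    · have := hmono y hy x (k + 1)
      simp only at this
      simp [hy, this]
  have hbump : ∀ x : ZMod K, (∃ m : ℕ, m < 1 ∧ x = k + (m : ZMod K)) ↔ x = k := by
    intro x
    constructor
    · rintro ⟨m, hm, rfl⟩
      obtain rfl : m = 0 := by omega
      simp
    · rintro rfl
      exact ⟨0, by omega, by simp⟩
  refine ⟨l, k, c, 1, by omega, by omega, le_refl _, by omega, ?_⟩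
  rcases hadj with h | h
  · left
    funext ⟨x, y⟩
    unfold zetaUp
    simp only [hbump, ← h, ← hσ x y]
    rcases hcfg (x, y) with h1 | h1 <;> simp [h1]
  · right
    funext ⟨x, y⟩
    unfold zetaDown
    simp only [hbump, ← h, ← hσ x y]
    rcases hcfg (x, y) with h1 | h1 <;> simp [h1]

/-! ### Volume along the path -/

lemma volume_succ_le (σ τ : ZMod K × ZMod L → ℤ) (h : ∃! x, σ x ≠ τ x) :
    volume τ ≤ volume σ + 1 := by
  classical
  obtain ⟨x, -, hx⟩ := h
  have hsub : ({z : ZMod K × ZMod L | τ z = 1} : Finset _) ⊆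
      insert x ({z : ZMod K × ZMod L | σ z = 1} : Finset _) := by
    intro z hz
    simp only [Finset.mem_filter, Finset.mem_univ, true_and] at hz
    simp only [Finset.mem_insert, Finset.mem_filter, Finset.mem_univ, true_and]
    by_cases hzx : z = x
    · exact Or.inl hzx
    · right
      by_contra hne
      exact hzx (hx z fun h => hne (h.trans hz))
  exact (Finset.card_le_card hsub).trans (Finset.card_insert_le _ _)

/-- A sequence of naturals increasing by at most one per step attains every intermediate value. -/
lemma exists_visit (T N : ℕ) (v : ℕ → ℕ) (h0 : v 0 ≤ N) (hT : N ≤ v T)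
    (hstep : ∀ t < T, v (t + 1) ≤ v t + 1) : ∃ t ≤ T, v t = N := by
  induction T with
  | zero => exact ⟨0, le_refl _, by omega⟩
  | succ T ih =>
    by_cases h : N ≤ v T
    · obtain ⟨t, ht, hv⟩ := ih h fun t ht => hstep t (by omega)
      exact ⟨t, by omega, hv⟩
    · have := hstep T (by omega)
      exact ⟨T + 1, le_refl _, by omega⟩

end Torus

/-- **Every optimal transition path crosses the saddle set** (for
`5 ≤ K < L`): every path of single-site spin flips from `⊟` to `⊞` along which
the Hamiltonian stays at most `Γ = 2K + 2` must contain a configuration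
belonging to `B_Γ`. -/
theorem ising_path_crosses_saddle (K L : ℕ) [NeZero K] [NeZero L]
    (hK : 5 ≤ K) (hKL : K < L)
    (T : ℕ) (ω : ℕ → (ZMod K × ZMod L → ℤ))
    (h0 : ω 0 = fun _ => -1) (hT : ω T = fun _ => 1)
    (hcfg : ∀ t ≤ T, IsIsingConfig (ω t))
    (hham : ∀ t ≤ T, ham K L (ω t) ≤ 2 * K + 2)
    (hstep : ∀ t < T, ∃! x : ZMod K × ZMod L, ω t x ≠ ω (t + 1) x) :
    ∃ t ≤ T, ω t ∈ saddleSet K L := by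
  have hv0 : volume (ω 0) = 0 := by
    rw [h0]; simp [volume]
  have hvT : volume (ω T) = K * L := by
    rw [hT]; simp [volume, ZMod.card]
  have hN : K * (K / 2) + 1 ≤ K * L := by
    have h1 : K / 2 + 1 ≤ L := by omega
    nlinarith
  obtain ⟨t, ht, hv⟩ := exists_visit T (K * (K / 2) + 1) (fun t => volume (ω t))
    (by simp only [hv0]; omega) (by simp only [hvT]; exact hN)
    (fun t ht => volume_succ_le _ _ (hstep t ht))
  exact ⟨t, ht, mem_saddleSet hK hKL _ (hcfg t ht) (hham t ht) hv⟩
end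

section
/- Condensation of the zero-range process: let (ℓ_N)_{N∈ℕ} be positive integers with ℓ_N → ∞ and ℓ_N/N → 0, and set 𝓔_N^x = {η ∈ 𝓗_N : η_x ≥ N − ℓ_N} for x ∈ S. Then for every x ∈ S, lim_{N→∞} μ_N(𝓔_N^x) = 1/κ; consequently lim_{N→∞} μ_N(⋃_{x∈S} 𝓔_N^x) = 1. -/
/-!
Write `w(η) = ∏ₓ 1 / a(ηₓ)` for the weight of a configuration. The heart of the matter is
`tendsto_mass`: for thresholds `t N` of order at least `N` with `N - t N → ∞`,
`N ^ α * ∑_{η : t N ≤ η x} w(η)` converges to `L`, the sum over all `ξ : S \ {x} → ℕ` of the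
product weight. Indeed, parametrising `η` by its restriction `ξ` to `S \ {x}` turns the left side
into a series over `ξ` whose terms `N ^ α / a(N - |ξ|) * ∏ 1 / a(ξ_y)` converge to
`∏ 1 / a(ξ_y)` and are dominated by `C ^ α * ∏ 1 / a(ξ_y)`, which is summable because `α > 1`;
dominated convergence applies.

Use this with `t N = N - ℓ N` (the valleys) and with `t N = N / κ`. The valleys are
eventually pairwise disjoint, and by pigeonhole the sets `{η : N / κ ≤ η x}` cover the
configuration space, so `Z_N` is squeezed between two sums over `x ∈ S`, both tending to `κ * L`.
Dividing gives both limits.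
-/

open Finset

/-- The rate function `a` of the zero-range process: `a(0) = 1`, `a(n) = n^α`. -/
noncomputable def aZR (α : ℝ) (n : ℕ) : ℝ := if n = 0 then 1 else (n : ℝ) ^ α

/-- The space of configurations of `N` particles on the cycle `S = ℤ/κℤ`. -/
abbrev ZRConfig (κ N : ℕ) [NeZero κ] : Type :=
  {η : ZMod κ → ℕ // ∑ x, η x = N}

noncomputable instance (κ N : ℕ) [NeZero κ] : Fintype (ZRConfig κ N) :=
  Fintype.ofInjective
    (fun η x => (⟨η.1 x, Nat.lt_succ_of_le <|
      le_of_le_of_eq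
        (Finset.single_le_sum (fun i _ => Nat.zero_le (η.1 i)) (Finset.mem_univ x))
        η.2⟩ : Fin (N + 1)))
    (fun η ζ hh => Subtype.ext (funext fun x => congrArg Fin.val (congrFun hh x)))

/-- The partition function `Z_N = N^α ∑_{η ∈ 𝓗_N} 1/a(η)`, where
`a(η) = ∏_x a(η_x)`. -/
noncomputable def ZZR (κ : ℕ) [NeZero κ] (α : ℝ) (N : ℕ) : ℝ :=
  (N : ℝ) ^ α * ∑ η : ZRConfig κ N, 1 / ∏ x, aZR α (η.1 x)

/-- The invariant measure `μ_N(η) = (N^α / Z_N) · (1 / a(η))`. -/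
noncomputable def muZR (κ : ℕ) [NeZero κ] (α : ℝ) (N : ℕ) (η : ZRConfig κ N) : ℝ :=
  ((N : ℝ) ^ α / ZZR κ α N) * (1 / ∏ x, aZR α (η.1 x))

open Filter Topology

/-! ### Single-site and product weights -/

lemma aZR_pos (α : ℝ) (n : ℕ) : 0 < aZR α n := by
  unfold aZR
  split_ifs with h
  · exact one_pos
  · have : (0 : ℝ) < n := by exact_mod_cast Nat.pos_of_ne_zero h
    positivity

lemma summable_inv_aZR {α : ℝ} (hα : 1 < α) : Summable fun n => 1 / aZR α n := by
  refine (summable_nat_add_iff 1).1 ?_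
  refine ((summable_nat_add_iff 1).2 (Real.summable_one_div_nat_rpow.2 hα)).congr fun n => ?_
  simp [aZR]

/-- A product weight `∏ i, w (ξ i)` is summable over `ι → ℕ`: every finite partial sum is part of
a sum over a box, which factorises and is at most `(∑' n, w n) ^ |ι|`. -/
lemma summable_pi_prod {ι : Type*} [Fintype ι] {w : ℕ → ℝ} (hw : ∀ n, 0 ≤ w n)
    (hs : Summable w) : Summable fun ξ : ι → ℕ => ∏ i, w (ξ i) := by
  classical
  refine summable_of_sum_le (c := ∏ _i : ι, ∑' n, w n)
    (fun ξ => Finset.prod_nonneg fun i _ => hw _) fun u => ?_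
  have hsub : u ⊆ Fintype.piFinset fun i => u.image fun ξ => ξ i := fun ξ hξ =>
    Fintype.mem_piFinset.2 fun i => Finset.mem_image_of_mem (fun ξ : ι → ℕ => ξ i) hξ
  calc ∑ ξ ∈ u, ∏ i, w (ξ i)
      ≤ ∑ ξ ∈ Fintype.piFinset (fun i => u.image fun ξ => ξ i), ∏ i, w (ξ i) :=
        Finset.sum_le_sum_of_subset_of_nonneg hsub
          fun ξ _ _ => Finset.prod_nonneg fun i _ => hw _
    _ = ∏ i, ∑ n ∈ u.image (fun ξ => ξ i), w n := (Finset.prod_univ_sum _ _).symm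
    _ ≤ ∏ _i : ι, ∑' n, w n :=
        Finset.prod_le_prod (fun i _ => Finset.sum_nonneg fun n _ => hw n)
          fun i _ => hs.sum_le_tsum _ fun n _ => hw n

lemma sum_eq_add_ne {κ : ℕ} [NeZero κ] (x : ZMod κ) (η : ZMod κ → ℕ) :
    ∑ y, η y = η x + ∑ y : {y // y ≠ x}, η y := by
  exact Fintype.sum_eq_add_sum_subtype_ne _ x

lemma prod_eq_mul_ne {κ : ℕ} [NeZero κ] (x : ZMod κ) (f : ZMod κ → ℝ) :
    ∏ y, f y = f x * ∏ y : {y // y ≠ x}, f y := by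
  exact Fintype.prod_eq_mul_prod_subtype_ne _ x

/-- The sum of the product weight over all configurations of the sites other than `x`, with any
number of particles. -/
noncomputable def bulkMass (κ : ℕ) [NeZero κ] (α : ℝ) (x : ZMod κ) : ℝ :=
  ∑' ξ : {y : ZMod κ // y ≠ x} → ℕ, ∏ y, 1 / aZR α (ξ y)

lemma bulkMass_eq (κ : ℕ) [NeZero κ] (α : ℝ) (x : ZMod κ) :
    bulkMass κ α x = bulkMass κ α 0 := by
  let e : {y : ZMod κ // y ≠ x} ≃ {y : ZMod κ // y ≠ 0} :=
    (Equiv.subRight x).subtypeEquiv fun y => by simp [sub_eq_zero]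
  rw [bulkMass, bulkMass, ← (e.arrowCongr (Equiv.refl ℕ)).tsum_eq]
  refine tsum_congr fun ξ => ?_
  rw [← e.prod_comp]
  simp

lemma bulkMass_pos {κ : ℕ} [NeZero κ] {α : ℝ} (hα : 1 < α) (x : ZMod κ) :
    0 < bulkMass κ α x :=
  (summable_pi_prod (fun n => (one_div_pos.2 (aZR_pos α n)).le)
    (summable_inv_aZR hα)).tsum_pos
      (fun _ => Finset.prod_nonneg fun _ _ => (one_div_pos.2 (aZR_pos α _)).le) 0
      (Finset.prod_pos fun _ _ => one_div_pos.2 (aZR_pos α _))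

/-! ### Asymptotics of the mass with a condensate at a given site -/

/-- The unnormalised mass `N ^ α * ∑ w(η)` of the configurations with at least `t` particles
at `x`. -/
noncomputable def siteMass (κ : ℕ) [NeZero κ] (α : ℝ) (x : ZMod κ) (N t : ℕ) : ℝ :=
  (N : ℝ) ^ α * ∑ η ∈ Finset.univ.filter (fun η : ZRConfig κ N => t ≤ η.1 x),
    1 / ∏ y, aZR α (η.1 y)

/-- Configurations with at least `t` particles at `x` correspond to their restrictions `ξ` to the
other sites, subject to `|ξ| + t ≤ N`. -/
lemma siteMass_eq_tsum (κ : ℕ) [NeZero κ] (α : ℝ) (x : ZMod κ) (N t : ℕ) :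
    siteMass κ α x N t = ∑' ξ : {y : ZMod κ // y ≠ x} → ℕ,
      if ∑ y, ξ y + t ≤ N then
        (N : ℝ) ^ α * (1 / aZR α (N - ∑ y, ξ y)) * ∏ y, 1 / aZR α (ξ y) else 0 := by
  classical
  let i : ZRConfig κ N → ({y : ZMod κ // y ≠ x} → ℕ) := fun η y => η.1 y
  have hsum : ∀ η : ZRConfig κ N, η.1 x + ∑ y, i η y = N := fun η => by
    rw [← sum_eq_add_ne x η.1, η.2]
  have hi : Function.Injective i := by
    intro η ζ h
    refine Subtype.ext (funext fun y => ?_)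
    by_cases hy : y = x
    · subst hy
      have h1 := hsum η
      have h2 := hsum ζ
      rw [h] at h1
      omega
    · exact congrFun h ⟨y, hy⟩
  rw [← hi.tsum_eq, tsum_fintype, siteMass, Finset.mul_sum, Finset.sum_filter]
  · refine Finset.sum_congr rfl fun η _ => ?_
    have h := hsum η
    refine if_congr (by omega) ?_ rfl
    rw [show N - ∑ y, i η y = η.1 x by omega, prod_eq_mul_ne x fun y => aZR α (η.1 y)]
    simp only [one_div, mul_inv, Finset.prod_inv_distrib, i, mul_assoc]
  · intro ξ hξ
    have hle : ∑ y, ξ y + t ≤ N := by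
      by_contra h
      simp [h] at hξ
    have hne : ∀ y : {y // y ≠ x}, (y : ZMod κ) ≠ x := fun y => y.2
    let η : ZMod κ → ℕ := fun y => if h : y = x then N - ∑ y, ξ y else ξ ⟨y, h⟩
    have hη : ∀ y : {y // y ≠ x}, η y = ξ y := fun y => by simp [η, hne y]
    refine ⟨⟨η, ?_⟩, funext hη⟩
    have hrest : ∑ y : {y // y ≠ x}, η y = ∑ y, ξ y := Finset.sum_congr rfl fun y _ => hη y
    have hx : η x = N - ∑ y, ξ y := dif_pos rfl
    rw [sum_eq_add_ne x η, hrest, hx]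
    omega

lemma tendsto_rpow_mul_inv_aZR (α : ℝ) (m : ℕ) :
    Tendsto (fun N : ℕ => (N : ℝ) ^ α * (1 / aZR α (N - m))) atTop (𝓝 1) := by
  have h1 : Tendsto (fun N : ℕ => ((N : ℝ) / (N - m : ℝ))) atTop (𝓝 1) := by
    simpa [sub_eq_add_neg] using tendsto_natCast_div_add_atTop (-(m : ℝ))
  have h2 := h1.rpow_const (p := α) (Or.inl one_ne_zero)
  rw [Real.one_rpow] at h2
  refine h2.congr' ?_
  filter_upwards [eventually_gt_atTop m] with N hN
  have hpos : (0 : ℝ) < N - m := by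
    rw [sub_pos]
    exact_mod_cast hN
  rw [aZR, if_neg (by omega), Nat.cast_sub hN.le, Real.div_rpow (by positivity) hpos.le]
  ring

/-- If `N ≤ C n` then `N ^ α / a(n)` is at most `C ^ α`. -/
lemma rpow_mul_inv_aZR_le {α : ℝ} (hα : 0 ≤ α) {C N n : ℕ} (hN : 0 < N) (h : N ≤ C * n) :
    (N : ℝ) ^ α * (1 / aZR α n) ≤ (C : ℝ) ^ α := by
  have hn : n ≠ 0 := by
    rintro rfl
    omega
  have hn' : (0 : ℝ) < n := by exact_mod_cast Nat.pos_of_ne_zero hn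
  rw [aZR, if_neg hn, mul_one_div, div_le_iff₀ (by positivity),
    ← Real.mul_rpow (by positivity) hn'.le]
  exact Real.rpow_le_rpow (by positivity) (by exact_mod_cast h) hα

/-- Dominated convergence for the mass carried by a condensate at `x`. -/
lemma tendsto_mass {κ : ℕ} [NeZero κ] {α : ℝ} (hα : 1 < α) (x : ZMod κ) {t : ℕ → ℕ} {C : ℕ}
    (hC : ∀ᶠ N in atTop, N ≤ C * t N) (ht : ∀ m, ∀ᶠ N in atTop, m + t N ≤ N) :
    Tendsto (fun N => siteMass κ α x N (t N)) atTop (𝓝 (bulkMass κ α 0)) := by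
  have hprod : ∀ ξ : {y : ZMod κ // y ≠ x} → ℕ, 0 ≤ ∏ y, 1 / aZR α (ξ y) := fun ξ =>
    Finset.prod_nonneg fun y _ => (one_div_pos.2 (aZR_pos α _)).le
  simp only [siteMass_eq_tsum]
  rw [← bulkMass_eq κ α x]
  refine tendsto_tsum_of_dominated_convergence
    (bound := fun ξ => (C : ℝ) ^ α * ∏ y, 1 / aZR α (ξ y))
    ((summable_pi_prod (fun n => (one_div_pos.2 (aZR_pos α n)).le)
      (summable_inv_aZR hα)).mul_left _) (fun ξ => ?_) ?_
  · have h := (tendsto_rpow_mul_inv_aZR α (∑ y, ξ y)).mul_const (∏ y, 1 / aZR α (ξ y))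
    rw [one_mul] at h
    refine h.congr' ?_
    filter_upwards [ht (∑ y, ξ y)] with N hN
    rw [if_pos hN]
  · filter_upwards [hC, eventually_gt_atTop 0] with N hN hN0 ξ
    split_ifs with h
    · have ha := aZR_pos α (N - ∑ y, ξ y)
      rw [Real.norm_of_nonneg (mul_nonneg (by positivity) (hprod ξ))]
      refine mul_le_mul_of_nonneg_right (rpow_mul_inv_aZR_le (by linarith) hN0 ?_) (hprod ξ)
      exact hN.trans (Nat.mul_le_mul_left _ (by omega))
    · rw [norm_zero]
      exact mul_nonneg (by positivity) (hprod ξ)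

/-! ### Disjoint valleys, covering, and the partition function -/

lemma sum_muZR (κ : ℕ) [NeZero κ] (α : ℝ) (N : ℕ) (s : Finset (ZRConfig κ N)) :
    ∑ η ∈ s, muZR κ α N η =
      ((N : ℝ) ^ α * ∑ η ∈ s, 1 / ∏ y, aZR α (η.1 y)) / ZZR κ α N := by
  simp only [muZR]
  rw [← Finset.mul_sum]
  ring

/-- Pairwise disjointness: no two sites can both hold more than half of the particles. -/
lemma mass_union {κ : ℕ} [NeZero κ] (α : ℝ) {N t : ℕ} (ht : N < 2 * t) :
    (N : ℝ) ^ α * ∑ η ∈ Finset.univ.filter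
        (fun η : ZRConfig κ N => ∃ x : ZMod κ, t ≤ η.1 x), 1 / ∏ y, aZR α (η.1 y) =
      ∑ x : ZMod κ, siteMass κ α x N t := by
  classical
  have hU : Finset.univ.filter (fun η : ZRConfig κ N => ∃ x : ZMod κ, t ≤ η.1 x) =
      Finset.univ.biUnion fun x : ZMod κ =>
        Finset.univ.filter (fun η : ZRConfig κ N => t ≤ η.1 x) := by
    ext η
    simp
  rw [hU, Finset.sum_biUnion, Finset.mul_sum]
  · rfl
  · intro x _ y _ hxy
    refine Finset.disjoint_left.2 fun η hx hy => ?_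
    have hx' := (Finset.mem_filter.1 hx).2
    have hy' := (Finset.mem_filter.1 hy).2
    have h1 := sum_eq_add_ne x η.1
    have h2 := Finset.single_le_sum (f := fun z : {z // z ≠ x} => η.1 z)
      (fun _ _ => Nat.zero_le _) (Finset.mem_univ ⟨y, hxy.symm⟩)
    have h3 := η.2
    dsimp only at h2
    omega

lemma sum_siteMass_le_ZZR {κ : ℕ} [NeZero κ] (α : ℝ) {N t : ℕ} (ht : N < 2 * t) :
    ∑ x : ZMod κ, siteMass κ α x N t ≤ ZZR κ α N := by
  rw [← mass_union α ht, ZZR]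
  refine mul_le_mul_of_nonneg_left ?_ (by positivity)
  exact Finset.sum_le_sum_of_subset_of_nonneg (Finset.filter_subset _ _) fun η _ _ =>
    (one_div_pos.2 (Finset.prod_pos fun y _ => aZR_pos α _)).le

/-- Pigeonhole: some site always holds at least `N / κ` particles. -/
lemma ZZR_le_sum_siteMass (κ : ℕ) [NeZero κ] (α : ℝ) (N : ℕ) :
    ZZR κ α N ≤ ∑ x : ZMod κ, siteMass κ α x N (N / κ) := by
  classical
  simp only [ZZR, siteMass]
  rw [← Finset.mul_sum]
  refine mul_le_mul_of_nonneg_left ?_ (by positivity)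
  simp only [Finset.sum_filter]
  rw [Finset.sum_comm]
  refine Finset.sum_le_sum fun η _ => ?_
  have hw : 0 ≤ 1 / ∏ y, aZR α (η.1 y) :=
    (one_div_pos.2 (Finset.prod_pos fun y _ => aZR_pos α _)).le
  obtain ⟨x, hx⟩ : ∃ x, N / κ ≤ η.1 x := by
    by_contra! h
    have h1 : ∑ x, η.1 x < ∑ _x : ZMod κ, N / κ :=
      Finset.sum_lt_sum_of_nonempty Finset.univ_nonempty fun x _ => h x
    rw [η.2, Finset.sum_const, Finset.card_univ, ZMod.card, smul_eq_mul] at h1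
    exact absurd (Nat.mul_div_le N κ) (by omega)
  calc 1 / ∏ y, aZR α (η.1 y)
      = if N / κ ≤ η.1 x then 1 / ∏ y, aZR α (η.1 y) else 0 := (if_pos hx).symm
    _ ≤ _ := Finset.single_le_sum
        (f := fun x => if N / κ ≤ η.1 x then 1 / ∏ y, aZR α (η.1 y) else 0)
        (fun y _ => by
          split_ifs
          exacts [hw, le_rfl]) (Finset.mem_univ x)

/-- **Condensation of the zero-range process** (Beltrán–Landim): for sticky
particles (`α > 1`) on the cycle `S = ℤ/κℤ` and any scale `ℓ_N` of positive
integers with `ℓ_N → ∞` and `ℓ_N / N → 0`, the invariant measure of the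
metastable valley `𝓔_N^x = {η : η_x ≥ N - ℓ_N}` converges to `1/κ` for every
site `x`; consequently `μ_N(⋃_x 𝓔_N^x) → 1`. -/
theorem zero_range_condensation (κ : ℕ) [NeZero κ] (hκ : 2 ≤ κ)
    (α : ℝ) (hα : 1 < α)
    (ℓ : ℕ → ℕ) (hℓpos : ∀ N, 0 < ℓ N)
    (hℓtop : Filter.Tendsto ℓ Filter.atTop Filter.atTop)
    (hℓsmall : Filter.Tendsto (fun N => (ℓ N : ℝ) / (N : ℝ)) Filter.atTop (nhds 0)) :
    (∀ x : ZMod κ,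
      Filter.Tendsto
        (fun N => ∑ η ∈ Finset.univ.filter
            (fun η : ZRConfig κ N => N - ℓ N ≤ η.1 x), muZR κ α N η)
        Filter.atTop (nhds (1 / (κ : ℝ)))) ∧
    Filter.Tendsto
      (fun N => ∑ η ∈ Finset.univ.filter
          (fun η : ZRConfig κ N => ∃ x : ZMod κ, N - ℓ N ≤ η.1 x), muZR κ α N η)
      Filter.atTop (nhds 1) := by
  have hhalf : ∀ᶠ N in atTop, 0 < N ∧ 2 * ℓ N < N := by
    filter_upwards [hℓsmall.eventually_lt_const (show (0 : ℝ) < 1 / 2 by norm_num),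
      eventually_gt_atTop 0] with N hN hN0
    have hN0' : (0 : ℝ) < N := by exact_mod_cast hN0
    rw [div_lt_iff₀ hN0'] at hN
    refine ⟨hN0, ?_⟩
    have : (2 : ℝ) * ℓ N < N := by linarith
    exact_mod_cast this
  set L := bulkMass κ α 0 with hL
  have hLpos : 0 < L := bulkMass_pos hα 0
  have hκ0 : (0 : ℝ) < κ := by
    have : 0 < κ := by omega
    exact_mod_cast this
  have hvalley : ∀ x : ZMod κ,
      Tendsto (fun N => siteMass κ α x N (N - ℓ N)) atTop (𝓝 L) := fun x => by
    refine tendsto_mass hα x (C := 2) ?_ fun m => ?_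
    · filter_upwards [hhalf] with N hN
      omega
    · filter_upwards [hhalf, hℓtop.eventually_ge_atTop m] with N hN hm
      omega
  have hcover : ∀ x : ZMod κ,
      Tendsto (fun N => siteMass κ α x N (N / κ)) atTop (𝓝 L) := fun x => by
    -- Rounding down in `N / κ` costs at most a factor `2` once `κ ≤ N`.
    refine tendsto_mass hα x (C := κ * 2) ?_ fun m => ?_
    · filter_upwards [eventually_ge_atTop κ] with N hN
      have h1 := Nat.div_add_mod N κ
      have h2 := Nat.mod_lt N (show 0 < κ by omega)
      have h3 := Nat.mul_le_mul_left κ (Nat.div_pos hN (by omega))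
      have h4 : κ * 2 * (N / κ) = 2 * (κ * (N / κ)) := by ring
      omega
    · filter_upwards [eventually_ge_atTop (2 * m)] with N hN
      have h1 : N / κ ≤ N / 2 := Nat.div_le_div_left hκ (by norm_num)
      omega
  have hsum : ∀ t : ℕ → ℕ, (∀ x : ZMod κ, Tendsto (fun N => siteMass κ α x N (t N)) atTop (𝓝 L)) →
      Tendsto (fun N => ∑ x : ZMod κ, siteMass κ α x N (t N)) atTop (𝓝 (κ * L)) := fun t ht => by
    have h := tendsto_finsetSum (Finset.univ : Finset (ZMod κ)) fun x _ => ht x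
    simpa [ZMod.card] using h
  have hZ : Tendsto (fun N => ZZR κ α N) atTop (𝓝 (κ * L)) := by
    refine tendsto_of_tendsto_of_tendsto_of_le_of_le' (hsum _ hvalley) (hsum _ hcover) ?_
      (Eventually.of_forall fun N => ZZR_le_sum_siteMass κ α N)
    filter_upwards [hhalf] with N hN
    exact sum_siteMass_le_ZZR α (by omega)
  have hne : (κ : ℝ) * L ≠ 0 := (mul_pos hκ0 hLpos).ne'
  constructor
  · intro x
    have h := (hvalley x).div hZ hne
    rw [show L / (κ * L) = 1 / (κ : ℝ) by field_simp] at h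
    refine h.congr fun N => ?_
    rw [sum_muZR]
    rfl
  · have h := (hsum _ hvalley).div hZ hne
    rw [div_self hne] at h
    refine h.congr' ?_
    filter_upwards [hhalf] with N hN
    rw [sum_muZR, mass_union α (by omega)]
    rfl
end
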